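/- arXiv:2202.04722 — 2 statements merged into one kernel-verified Lean document; each statement's English description precedes it below -/
import Mathlib

section
/- Let 0 ≤ α < 1/4 and, for each positive integer N, let x̃^{(N)}_{−N},…,x̃^{(N)}_N be any set of α-perturbed nodes, with w̃^{(N)}_{−N},…,w̃^{(N)}_N the unique quadrature weights exact on T_N at these nodes. Then for every continuous 2π-periodic function f: ℝ → ℂ, the quadrature values Ĩ_N(f) = Σ_{j=−N}^{N} w̃^{(N)}_j f(x̃^{(N)}_j) converge to ∫_{−π}^{π} f(x) dx as N → ∞. -/
open Real Finset

/-- `q` is a trigonometric polynomial of degree ≤ N. -/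
def IsTrigPoly (N : ℕ) (q : ℝ → ℂ) : Prop :=
  ∃ c : ℤ → ℂ, ∀ x : ℝ,
    q x = ∑ k ∈ Finset.Icc (-(N:ℤ)) (N:ℤ), c k * Complex.exp (Complex.I * (k : ℂ) * (x : ℂ))

/-- `x` is a set of α-perturbed nodes of size 2N+1. -/
def PerturbedNodes (N : ℕ) (α : ℝ) (x : ℤ → ℝ) : Prop :=
  ∀ j ∈ Finset.Icc (-(N:ℤ)) (N:ℤ),
    |x j - (j : ℝ) * (2*π/(2*N+1))| ≤ α * (2*π/(2*N+1))

/-- The weights `w` form a quadrature rule at the nodes `x` that is exact on `T_N`. -/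
def ExactQuad (N : ℕ) (x : ℤ → ℝ) (w : ℤ → ℝ) : Prop :=
  ∀ q : ℝ → ℂ, IsTrigPoly N q →
    ∑ j ∈ Finset.Icc (-(N:ℤ)) (N:ℤ), (w j : ℂ) * q (x j) = ∫ t in (-π)..π, q t

/-- A continuous function on `[-π, π]` with equal end values and summable Fourier coefficients
is the pointwise sum of its Fourier series. -/
lemma hasSum_fourier_neg_pi_pi {f : ℝ → ℂ} (hf : Continuous f) (hper : f (-π) = f π)
    {c : ℤ → ℂ} (hc : ∀ m : ℤ, ∫ t in (-π)..π, Complex.exp (-(Complex.I * m * t)) * f t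
      = 2 * π * c m) (hs : Summable c) {t : ℝ} (ht : t ∈ Set.Icc (-π) π) :
    HasSum (fun m : ℤ => c m * Complex.exp (Complex.I * m * t)) (f t) := by
  have hT : Fact (0 < 2 * π) := ⟨by positivity⟩
  have hend : -π + 2 * π = π := by ring
  have hcont : Continuous (AddCircle.liftIco (2 * π) (-π) f) :=
    AddCircle.liftIco_continuous (by rw [hend, hper]) hf.continuousOn
  set F : C(AddCircle (2 * π), ℂ) := ⟨AddCircle.liftIco (2 * π) (-π) f, hcont⟩ with hF
  have hcoef : fourierCoeff F = c := by
    funext m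
    change fourierCoeff (AddCircle.liftIco (2 * π) (-π) f) m = c m
    rw [fourierCoeff_liftIco_eq, fourierCoeffOn_eq_integral, hend]
    have : ∀ s : ℝ, (fourier (-m) (s : AddCircle (π - -π))) • f s
        = Complex.exp (-(Complex.I * m * s)) * f s := by
      intro s
      rw [fourier_coe_apply, smul_eq_mul]
      congr 2
      have : (π : ℂ) ≠ 0 := by exact_mod_cast pi_ne_zero
      push_cast
      field_simp
      ring
    simp_rw [this]
    rw [hc, Complex.real_smul]
    have : (π : ℂ) ≠ 0 := by exact_mod_cast pi_ne_zero
    push_cast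
    field_simp
    ring
  have key := has_pointwise_sum_fourier_series_of_summable (f := F) (by rwa [hcoef])
    (t : AddCircle (2 * π))
  have hval : F (t : AddCircle (2 * π)) = f t := by
    rcases eq_or_lt_of_le ht.2 with h | h
    · have : (t : AddCircle (2 * π)) = ((-π : ℝ) : AddCircle (2 * π)) := by
        rw [h, ← AddCircle.coe_add_period (2 * π) (-π), hend]
      rw [this, h, ← hper]
      exact AddCircle.liftIco_coe_apply ⟨le_rfl, by linarith [pi_pos]⟩
    · exact AddCircle.liftIco_coe_apply ⟨ht.1, by rw [hend]; exact h⟩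
  rw [hval, hcoef] at key
  convert! key using 2 with m
  rw [fourier_coe_apply, smul_eq_mul]
  congr 2
  have : (π : ℂ) ≠ 0 := by exact_mod_cast pi_ne_zero
  push_cast
  field_simp

lemma integral_exp_I_mul_eq_sinc (ω : ℝ) :
    ∫ t in (-π)..π, Complex.exp (Complex.I * ω * t) = 2 * π * sinc (π * ω) := by
  rcases eq_or_ne ω 0 with rfl | h
  · simp [two_mul]
  have hω : (ω : ℂ) ≠ 0 := by exact_mod_cast h
  have hπ : (π : ℂ) ≠ 0 := by exact_mod_cast pi_ne_zero
  rw [integral_exp_mul_complex (by simp [hω]), sinc_of_ne_zero (by positivity)]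
  have e1 : Complex.I * ω * π = (π * ω : ℂ) * Complex.I := by ring
  have e2 : Complex.I * ω * (-π : ℝ) = (-(π * ω) : ℂ) * Complex.I := by push_cast; ring
  rw [e1, e2]
  simp only [Complex.exp_mul_I, Complex.cos_neg, Complex.sin_neg]
  push_cast
  field_simp
  ring

/-- Moduli of the Fourier coefficients of `1 - cos (δ t)` on `[-π, π]`. -/
noncomputable def cosCoeff (m : ℤ) (δ : ℝ) : ℝ :=
  if m = 0 then 1 - sinc (π * δ) else δ * sin (π * δ) / (π * ((m : ℝ) ^ 2 - δ ^ 2))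

/-- Moduli of the coefficients of `sin (δ t)` on `[-π, π]` in the half-integer frequencies. -/
noncomputable def sinCoeff (m : ℤ) (δ : ℝ) : ℝ :=
  δ * cos (π * δ) / (π * (((m : ℝ) - 1 / 2) ^ 2 - δ ^ 2))

lemma one_le_sq_intCast {m : ℤ} (hm : m ≠ 0) : (1 : ℝ) ≤ (m : ℝ) ^ 2 := by
  have : (1 : ℤ) ≤ m ^ 2 := by
    have := sq_pos_of_ne_zero hm; linarith
  exact_mod_cast this

lemma quarter_le_sq_intCast_sub_half (m : ℤ) : (1 / 4 : ℝ) ≤ ((m : ℝ) - 1 / 2) ^ 2 := by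
  have : (0 : ℤ) ≤ m * (m - 1) := by
    rcases le_or_gt m 0 with h | h <;> nlinarith
  have : (0 : ℝ) ≤ m * (m - 1) := by exact_mod_cast this
  nlinarith

lemma summable_cosCoeff {δ : ℝ} (hδ : |δ| < 1 / 2) : Summable (fun m => cosCoeff m δ) := by
  have hδ2 : δ ^ 2 < 1 / 4 := by rw [← sq_abs]; nlinarith [abs_nonneg δ]
  have h := (summable_one_div_int_pow (p := 2)).2 (by norm_num)
  have h' : Summable (fun m : ℤ => (if m = 0 then |1 - sinc (π * δ)| else 0)
      + (|δ * sin (π * δ)| / π * 2) * (1 / (m : ℝ) ^ 2)) :=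
    (summable_of_hasFiniteSupport ((Set.finite_singleton (0 : ℤ)).subset (by
      intro m hm; by_contra hne; simp_all))).add (h.mul_left _)
  refine h'.of_norm_bounded fun m => ?_
  rcases eq_or_ne m 0 with rfl | hm
  · simp [cosCoeff]
  · have h1 := one_le_sq_intCast hm
    have h2 : 0 < (m : ℝ) ^ 2 - δ ^ 2 := by linarith
    rw [cosCoeff, if_neg hm, if_neg hm, zero_add, norm_eq_abs, abs_div, abs_mul π,
      abs_of_pos pi_pos, abs_of_pos h2]
    have h3 : 1 / ((m : ℝ) ^ 2 - δ ^ 2) ≤ 2 * (1 / (m : ℝ) ^ 2) := by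
      rw [mul_one_div, div_le_div_iff₀ h2 (by linarith)]; linarith
    calc |δ * sin (π * δ)| / (π * ((m : ℝ) ^ 2 - δ ^ 2))
        = |δ * sin (π * δ)| / π * (1 / ((m : ℝ) ^ 2 - δ ^ 2)) := by field_simp
      _ ≤ |δ * sin (π * δ)| / π * (2 * (1 / (m : ℝ) ^ 2)) := by gcongr
      _ = _ := by ring

lemma summable_sinCoeff {δ : ℝ} (hδ : |δ| ≤ 1 / 4) : Summable (fun m => sinCoeff m δ) := by
  have hδ2 : δ ^ 2 ≤ 1 / 16 := by rw [← sq_abs]; nlinarith [abs_nonneg δ]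
  have h : Summable (fun m : ℤ => 1 / ((m : ℝ) - 1 / 2) ^ 2) := by
    have := (Real.summable_one_div_int_add_rpow (-(1 / 2)) 2).2 (by norm_num)
    refine this.congr fun m => ?_
    rw [Real.rpow_ofNat, sq_abs, sub_eq_add_neg]
  refine (h.mul_left (|δ * cos (π * δ)| / π * 2)).of_norm_bounded fun m => ?_
  have h1 := quarter_le_sq_intCast_sub_half m
  have h2 : 0 < ((m : ℝ) - 1 / 2) ^ 2 - δ ^ 2 := by linarith
  rw [sinCoeff, norm_eq_abs, abs_div, abs_mul π, abs_of_pos pi_pos, abs_of_pos h2]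
  have h3 : 1 / (((m : ℝ) - 1 / 2) ^ 2 - δ ^ 2) ≤ 2 * (1 / ((m : ℝ) - 1 / 2) ^ 2) := by
    rw [mul_one_div, div_le_div_iff₀ h2 (by linarith)]; linarith
  calc |δ * cos (π * δ)| / (π * (((m : ℝ) - 1 / 2) ^ 2 - δ ^ 2))
      = |δ * cos (π * δ)| / π * (1 / (((m : ℝ) - 1 / 2) ^ 2 - δ ^ 2)) := by field_simp
    _ ≤ |δ * cos (π * δ)| / π * (2 * (1 / ((m : ℝ) - 1 / 2) ^ 2)) := by gcongr
    _ = _ := by ring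

lemma sinc_sub_add_sinc_add {δ : ℝ} (hδ : |δ| < 1 / 2) {m : ℤ} (hm : m ≠ 0) :
    sinc (π * (δ - m)) + sinc (π * (δ + m)) = -2 * (cosCoeff m δ * cos (m * π)) := by
  have hδ2 : δ ^ 2 < 1 / 4 := by rw [← sq_abs]; nlinarith [abs_nonneg δ]
  have h1 := one_le_sq_intCast hm
  have hne : (m : ℝ) ^ 2 - δ ^ 2 ≠ 0 := by linarith
  have hm1 : δ - m ≠ 0 := fun h => hne (by linear_combination -(δ + m) * h)
  have hm2 : δ + m ≠ 0 := fun h => hne (by linear_combination (m - δ) * h)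
  rw [sinc_of_ne_zero (by positivity), sinc_of_ne_zero (by positivity), cosCoeff, if_neg hm,
    mul_sub, mul_add, sin_sub, sin_add, mul_comm π (m : ℝ), sin_int_mul_pi]
  have : (m : ℝ) ^ 2 - δ ^ 2 = - ((δ - m) * (δ + m)) := by ring
  rw [this, show π * δ - m * π = π * (δ - m) by ring, show π * δ + m * π = π * (δ + m) by ring]
  field_simp
  ring

lemma cos_int_sub_half_mul_pi (m : ℤ) : cos (((m : ℝ) - 1 / 2) * π) = 0 := by
  rw [show ((m : ℝ) - 1 / 2) * π = m * π - π / 2 by ring, cos_sub_pi_div_two, sin_int_mul_pi]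

lemma sinc_sub_sub_sinc_add {δ : ℝ} (hδ : |δ| ≤ 1 / 4) (m : ℤ) :
    sinc (π * (δ - (m - 1 / 2))) - sinc (π * (δ + (m - 1 / 2)))
      = 2 * (sinCoeff m δ * sin ((m - 1 / 2) * π)) := by
  have hδ2 : δ ^ 2 ≤ 1 / 16 := by rw [← sq_abs]; nlinarith [abs_nonneg δ]
  have h1 := quarter_le_sq_intCast_sub_half m
  have hcos := cos_int_sub_half_mul_pi m
  rw [sinCoeff]
  generalize (m : ℝ) - 1 / 2 = ν at *
  have hne : ν ^ 2 - δ ^ 2 ≠ 0 := by linarith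
  have hm1 : δ - ν ≠ 0 := fun h => hne (by linear_combination -(δ + ν) * h)
  have hm2 : δ + ν ≠ 0 := fun h => hne (by linear_combination (ν - δ) * h)
  rw [sinc_of_ne_zero (by positivity), sinc_of_ne_zero (by positivity),
    mul_sub, mul_add, sin_sub, sin_add, mul_comm π ν, hcos]
  have : ν ^ 2 - δ ^ 2 = - ((δ - ν) * (δ + ν)) := by ring
  rw [this, show π * δ - ν * π = π * (δ - ν) by ring, show π * δ + ν * π = π * (δ + ν) by ring]
  field_simp
  ring

lemma hasSum_one_sub_cos {δ : ℝ} (hδ : |δ| < 1 / 2) {t : ℝ} (ht : t ∈ Set.Icc (-π) π) :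
    HasSum (fun m : ℤ => (cosCoeff m δ : ℂ) * (cos (m * π) * Complex.exp (Complex.I * m * t)))
      (1 - Complex.cos (δ * t)) := by
  have hs : Summable (fun m : ℤ => (cosCoeff m δ * cos (m * π) : ℂ)) := by
    refine (summable_cosCoeff hδ).abs.of_norm_bounded fun m => ?_
    rw [norm_mul, Complex.norm_real, Complex.norm_real, norm_eq_abs, norm_eq_abs]
    exact mul_le_of_le_one_right (abs_nonneg _) (abs_cos_le_one _)
  have := hasSum_fourier_neg_pi_pi (f := fun t : ℝ => 1 - Complex.cos (δ * t)) (by fun_prop)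
    (by simp) (c := fun m : ℤ => (cosCoeff m δ * cos (m * π) : ℂ)) ?_ hs ht
  · simpa only [mul_assoc] using this
  intro m
  have hi : ∀ ω : ℝ, IntervalIntegrable (fun t : ℝ => Complex.exp (Complex.I * ω * t))
      MeasureTheory.volume (-π) π := fun ω =>
    Continuous.intervalIntegrable (by fun_prop) _ _
  have he : ∀ s : ℝ, Complex.exp (-(Complex.I * m * s)) * (1 - Complex.cos (δ * s))
      = Complex.exp (Complex.I * (-m : ℝ) * s) - ((1 / 2) * Complex.exp (Complex.I * (δ - m : ℝ) * s)
        + (1 / 2) * Complex.exp (Complex.I * (-(δ + m) : ℝ) * s)) := by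
    intro s
    have e1 : Complex.I * (δ - m : ℝ) * s = -(Complex.I * m * s) + δ * s * Complex.I := by
      push_cast; ring
    have e2 : Complex.I * (-(δ + m) : ℝ) * s = -(Complex.I * m * s) + -(δ * s) * Complex.I := by
      push_cast; ring
    have e3 : Complex.I * (-m : ℝ) * s = -(Complex.I * m * s) := by push_cast; ring
    rw [e1, e2, e3, Complex.exp_add, Complex.exp_add, Complex.exp_mul_I, Complex.exp_mul_I,
      Complex.cos_neg, Complex.sin_neg]
    ring
  simp_rw [he]
  rw [intervalIntegral.integral_sub (hi _) (((hi _).const_mul _).add ((hi _).const_mul _)),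
    intervalIntegral.integral_add ((hi _).const_mul _) ((hi _).const_mul _),
    intervalIntegral.integral_const_mul, intervalIntegral.integral_const_mul,
    integral_exp_I_mul_eq_sinc, integral_exp_I_mul_eq_sinc, integral_exp_I_mul_eq_sinc,
    mul_neg, mul_neg, sinc_neg, sinc_neg]
  rcases eq_or_ne m 0 with rfl | hm
  · simp [cosCoeff]; ring
  · have h0 : sinc (π * (m : ℝ)) = 0 := by
      have : (m : ℝ) ≠ 0 := by exact_mod_cast hm
      rw [sinc_of_ne_zero (by positivity), mul_comm π (m : ℝ), sin_int_mul_pi, zero_div]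
    have h1 : (sinc (π * (δ - m)) : ℂ) + sinc (π * (δ + m)) = -2 * (cosCoeff m δ * cos (m * π)) := by
      have := sinc_sub_add_sinc_add hδ hm
      rw [← Complex.ofReal_add, this]; push_cast; ring
    rw [h0]
    push_cast at h1 ⊢
    linear_combination (-(π : ℂ)) * h1

lemma hasSum_sin {δ : ℝ} (hδ : |δ| ≤ 1 / 4) {t : ℝ} (ht : t ∈ Set.Icc (-π) π) :
    HasSum (fun m : ℤ => (sinCoeff m δ : ℂ) * (-(Complex.I * sin ((m - 1 / 2) * π))
      * Complex.exp (Complex.I * (m - 1 / 2) * t))) (Complex.sin (δ * t)) := by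
  have hs : Summable (fun m : ℤ =>
      (sinCoeff m δ : ℂ) * (-(Complex.I * (sin ((m - 1 / 2) * π) : ℝ)))) := by
    refine (summable_sinCoeff hδ).abs.of_norm_bounded fun m => ?_
    rw [norm_mul, norm_neg, norm_mul, Complex.norm_I, one_mul,
      Complex.norm_real, Complex.norm_real, norm_eq_abs, norm_eq_abs]
    exact mul_le_of_le_one_right (abs_nonneg _) (abs_sin_le_one _)
  have := hasSum_fourier_neg_pi_pi
    (f := fun t : ℝ => Complex.exp (Complex.I * (1 / 2) * t) * Complex.sin (δ * t)) (by fun_prop)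
    ?_ (c := fun m : ℤ => (sinCoeff m δ : ℂ) * (-(Complex.I * (sin ((m - 1 / 2) * π) : ℝ)))) ?_ hs ht
  · have h2 := this.mul_left (Complex.exp (-(Complex.I * (1 / 2) * t)))
    rw [← mul_assoc, ← Complex.exp_add, neg_add_cancel, Complex.exp_zero, one_mul] at h2
    convert! h2 using 2 with m
    have e1 : Complex.I * (m - 1 / 2) * t = -(Complex.I * (1 / 2) * t) + Complex.I * m * t := by ring
    rw [e1, Complex.exp_add]
    push_cast
    ring
  · have e1 : Complex.I * (1 / 2) * (-π : ℝ) = (-(π / 2 : ℝ) : ℂ) * Complex.I := by push_cast; ring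
    have e2 : Complex.I * (1 / 2) * (π : ℝ) = ((π / 2 : ℝ) : ℂ) * Complex.I := by push_cast; ring
    rw [e1, e2, Complex.exp_mul_I, Complex.exp_mul_I, Complex.cos_neg, Complex.sin_neg,
      ← Complex.ofReal_cos, ← Complex.ofReal_sin, cos_pi_div_two, sin_pi_div_two,
      Complex.ofReal_neg, mul_neg, Complex.sin_neg]
    push_cast
    ring
  intro m
  have hi : ∀ ω : ℝ, IntervalIntegrable (fun t : ℝ => Complex.exp (Complex.I * ω * t))
      MeasureTheory.volume (-π) π := fun ω =>
    Continuous.intervalIntegrable (by fun_prop) _ _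
  have he : ∀ s : ℝ, Complex.exp (-(Complex.I * m * s)) *
      (Complex.exp (Complex.I * (1 / 2) * s) * Complex.sin (δ * s))
      = (-Complex.I / 2) * Complex.exp (Complex.I * (δ - (m - 1 / 2) : ℝ) * s)
        - (-Complex.I / 2) * Complex.exp (Complex.I * (-(δ + (m - 1 / 2)) : ℝ) * s) := by
    intro s
    have e1 : Complex.I * (δ - (m - 1 / 2) : ℝ) * s
        = -(Complex.I * m * s) + Complex.I * (1 / 2) * s + δ * s * Complex.I := by
      push_cast; ring
    have e2 : Complex.I * (-(δ + (m - 1 / 2)) : ℝ) * s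
        = -(Complex.I * m * s) + Complex.I * (1 / 2) * s + -(δ * s) * Complex.I := by
      push_cast; ring
    rw [e1, e2]
    simp only [Complex.exp_add]
    rw [Complex.exp_mul_I, Complex.exp_mul_I, Complex.cos_neg, Complex.sin_neg]
    linear_combination (Complex.exp (-(Complex.I * m * s)) * Complex.exp (Complex.I * (1 / 2) * s)
      * Complex.sin (δ * s)) * Complex.I_sq
  simp_rw [he]
  rw [intervalIntegral.integral_sub ((hi _).const_mul _) ((hi _).const_mul _),
    intervalIntegral.integral_const_mul, intervalIntegral.integral_const_mul,
    integral_exp_I_mul_eq_sinc, integral_exp_I_mul_eq_sinc, mul_neg π, sinc_neg]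
  have h1 : (sinc (π * (δ - (m - 1 / 2))) : ℂ) - sinc (π * (δ + (m - 1 / 2)))
      = 2 * (sinCoeff m δ * (sin ((m - 1 / 2) * π) : ℝ)) := by
    rw [← Complex.ofReal_sub, sinc_sub_sub_sinc_add hδ m]; push_cast; ring
  linear_combination (-Complex.I * π) * h1

lemma hasSum_cosCoeff {δ : ℝ} (hδ : |δ| < 1 / 2) :
    HasSum (fun m : ℤ => cosCoeff m δ) (1 - cos (π * δ)) := by
  have h := hasSum_one_sub_cos hδ (t := π) ⟨by linarith [pi_pos], le_rfl⟩
  rw [← Complex.hasSum_ofReal]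
  push_cast
  rw [mul_comm (π : ℂ)]
  convert! h using 2 with m
  have e1 : Complex.I * m * π = ((m * π : ℝ) : ℂ) * Complex.I := by push_cast; ring
  have e2 := sin_sq_add_cos_sq ((m : ℝ) * π)
  rw [sin_int_mul_pi] at e2
  have e3 : (cos (m * π) : ℂ) ^ 2 = 1 := by
    have : cos (m * π) ^ 2 = 1 := by linarith
    exact_mod_cast this
  rw [e1, Complex.exp_mul_I, ← Complex.ofReal_cos, ← Complex.ofReal_sin, sin_int_mul_pi,
    Complex.ofReal_zero]
  linear_combination (-(cosCoeff m δ : ℂ)) * e3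

lemma hasSum_sinCoeff {δ : ℝ} (hδ : |δ| ≤ 1 / 4) :
    HasSum (fun m : ℤ => sinCoeff m δ) (sin (π * δ)) := by
  have h := hasSum_sin hδ (t := π) ⟨by linarith [pi_pos], le_rfl⟩
  rw [← Complex.hasSum_ofReal]
  push_cast
  rw [mul_comm (π : ℂ)]
  convert! h using 2 with m
  have e1 : Complex.I * (m - 1 / 2) * π = (((m - 1 / 2) * π : ℝ) : ℂ) * Complex.I := by
    push_cast; ring
  have e2 := sin_sq_add_cos_sq (((m : ℝ) - 1 / 2) * π)
  have hc := cos_int_sub_half_mul_pi m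
  rw [hc] at e2
  have e3 : (sin ((m - 1 / 2) * π) : ℂ) ^ 2 = 1 := by
    have : sin ((m - 1 / 2) * π) ^ 2 = 1 := by linarith
    exact_mod_cast this
  rw [e1, Complex.exp_mul_I, ← Complex.ofReal_cos, ← Complex.ofReal_sin, hc, Complex.ofReal_zero,
    zero_add]
  linear_combination (-(sinCoeff m δ : ℂ)) * e3
    + (sinCoeff m δ : ℂ) * (sin ((m - 1 / 2) * π) : ℂ) ^ 2 * Complex.I_sq

lemma monotoneOn_one_sub_sinc : MonotoneOn (fun x => 1 - sinc x) (Set.Icc 0 π) := by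
  intro a ha b hb hab
  simp only
  rcases eq_or_lt_of_le ha.1 with h | h
  · rw [← h, sinc_zero]; linarith [sinc_le_one b]
  rcases eq_or_lt_of_le hab with h' | h'
  · rw [h']
  have := strictConcaveOn_sin_Icc.concaveOn.neg.secant_mono (a := 0) (x := a) (y := b)
    ⟨le_rfl, pi_pos.le⟩ ha hb h.ne' (h.trans h').ne' hab
  simp only [Pi.neg_apply, sin_zero, neg_zero, sub_zero, neg_div] at this
  rw [sinc_of_ne_zero h.ne', sinc_of_ne_zero (h.trans h').ne']
  linarith

lemma monotoneOn_mul_cos : MonotoneOn (fun x => x * cos x) (Set.Icc 0 (π / 4)) := by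
  refine monotoneOn_of_deriv_nonneg (convex_Icc _ _) (by fun_prop) (by fun_prop) ?_
  intro x hx
  rw [interior_Icc] at hx
  have hd : deriv (fun x => x * cos x) x = cos x - x * sin x := by
    have := ((hasDerivAt_id x).mul (hasDerivAt_cos x)).deriv
    simp only [id] at this
    exact this.trans (by ring)
  rw [hd]
  have h1 : sin x ≤ cos x := by
    rw [← cos_pi_div_two_sub]
    exact cos_le_cos_of_nonneg_of_le_pi hx.1.le (by linarith [hx.1, pi_pos]) (by linarith [hx.2])
  have h2 : 0 ≤ sin x := sin_nonneg_of_nonneg_of_le_pi hx.1.le (by linarith [hx.2, pi_pos])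
  have h3 : x ≤ 1 := by linarith [hx.2, pi_lt_four]
  nlinarith

lemma cosCoeff_abs (m : ℤ) (δ : ℝ) : cosCoeff m |δ| = cosCoeff m δ := by
  rcases abs_choice δ with h | h <;> rw [h]
  simp [cosCoeff, sinc_neg]

lemma abs_sinCoeff_abs (m : ℤ) (δ : ℝ) : |sinCoeff m (|δ|)| = |sinCoeff m δ| := by
  rcases abs_choice δ with h | h <;> rw [h]
  simp [sinCoeff, neg_div]

lemma abs_cosCoeff_le {δ α : ℝ} (hδ : |δ| ≤ α) (hα : α ≤ 1 / 4) (m : ℤ) :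
    |cosCoeff m δ| ≤ cosCoeff m α := by
  rw [← cosCoeff_abs]
  have h0 := abs_nonneg δ
  generalize |δ| = d at *
  have hπ := pi_pos
  have h1 : π * d ≤ π * α := by gcongr
  have h2 : π * α ≤ π / 4 := by nlinarith
  have h3 : 0 ≤ π * d := by positivity
  rcases eq_or_ne m 0 with rfl | hm
  · simp only [cosCoeff, if_true]
    rw [abs_of_nonneg (by linarith [sinc_le_one (π * d)])]
    exact monotoneOn_one_sub_sinc ⟨h3, by linarith⟩ ⟨by linarith, by linarith⟩ h1
  · have hm1 := one_le_sq_intCast hm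
    have hs0 : 0 ≤ sin (π * d) := sin_nonneg_of_nonneg_of_le_pi h3 (by linarith)
    have hs1 : sin (π * d) ≤ sin (π * α) :=
      sin_le_sin_of_le_of_le_pi_div_two (by linarith) (by linarith) h1
    have hd1 : 0 < (m : ℝ) ^ 2 - α ^ 2 := by nlinarith
    have hd2 : (m : ℝ) ^ 2 - α ^ 2 ≤ (m : ℝ) ^ 2 - d ^ 2 := by gcongr
    have hd3 := hd1.trans_le hd2
    simp only [cosCoeff, if_neg hm]
    have hα0 : 0 ≤ α := h0.trans hδ
    have hs2 : 0 ≤ sin (π * α) := hs0.trans hs1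
    rw [abs_of_nonneg (by positivity)]
    gcongr

lemma abs_sinCoeff_le {δ α : ℝ} (hδ : |δ| ≤ α) (hα : α ≤ 1 / 4) (m : ℤ) :
    |sinCoeff m δ| ≤ sinCoeff m α := by
  rw [← abs_sinCoeff_abs]
  have h0 := abs_nonneg δ
  generalize |δ| = d at *
  have hπ := pi_pos
  have h1 : π * d ≤ π * α := by gcongr
  have h2 : π * α ≤ π / 4 := by nlinarith
  have h3 : 0 ≤ π * d := by positivity
  have hm1 := quarter_le_sq_intCast_sub_half m
  have hc0 : 0 ≤ cos (π * d) := cos_nonneg_of_mem_Icc ⟨by linarith, by linarith⟩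
  have hmono : d * cos (π * d) ≤ α * cos (π * α) := by
    have := monotoneOn_mul_cos ⟨h3, h1.trans h2⟩ ⟨h3.trans h1, h2⟩ h1
    simp only [mul_assoc] at this
    exact le_of_mul_le_mul_left this hπ
  have hd1 : 0 < ((m : ℝ) - 1 / 2) ^ 2 - α ^ 2 := by nlinarith
  have hd2 : ((m : ℝ) - 1 / 2) ^ 2 - α ^ 2 ≤ ((m : ℝ) - 1 / 2) ^ 2 - d ^ 2 := by gcongr
  have hd3 := hd1.trans_le hd2
  simp only [sinCoeff]
  rw [abs_of_nonneg (by positivity)]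
  have : 0 ≤ α * cos (π * α) := le_trans (by positivity) hmono
  gcongr

lemma sum_Icc_neg_eq_sum_range {M : Type*} [AddCommMonoid M] (N : ℕ) (f : ℤ → M) :
    ∑ j ∈ Icc (-(N : ℤ)) N, f j = ∑ i ∈ range (2 * N + 1), f (i - N) := by
  refine Finset.sum_nbij' (fun j => (j + N).toNat) (fun i => (i : ℤ) - N) ?_ ?_ ?_ ?_ ?_
  · intro j hj; simp only [Finset.mem_Icc, Finset.mem_range] at *; omega
  · intro i hi; simp only [Finset.mem_Icc, Finset.mem_range] at *; omega
  · intro j hj; simp only [Finset.mem_Icc] at *; omega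
  · intro i hi; simp
  · intro j hj
    simp only [Finset.mem_Icc] at hj
    congr 1; omega

lemma sum_exp_equispaced_eq_zero {N : ℕ} {d : ℤ} (hd : d ≠ 0) (hdN : |d| ≤ 2 * N) :
    ∑ j ∈ Icc (-(N : ℤ)) N,
      Complex.exp (Complex.I * d * (j * (2 * π / (2 * N + 1) : ℝ))) = 0 := by
  have hM : (2 * N + 1 : ℂ) ≠ 0 := by exact_mod_cast (2 * N).succ_ne_zero
  set ζ := Complex.exp (2 * π * Complex.I * d / (2 * N + 1)) with hζ
  have hζM : ζ ^ (2 * N + 1) = 1 := by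
    rw [hζ, ← Complex.exp_nat_mul, Complex.exp_eq_one_iff]
    refine ⟨d, ?_⟩
    push_cast
    field_simp
  have hζ1 : ζ ≠ 1 := by
    intro h
    rw [hζ, Complex.exp_eq_one_iff] at h
    obtain ⟨n, hn⟩ := h
    have h2 : (d : ℂ) = n * (2 * N + 1) := by
      have := Complex.two_pi_I_ne_zero
      field_simp at hn
      linear_combination hn
    have h3 : d = n * (2 * N + 1) := by exact_mod_cast h2
    have hn0 : n ≠ 0 := by rintro rfl; simp at h3; exact hd h3
    have : 1 ≤ |n| := Int.one_le_abs hn0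
    rw [h3, abs_mul, abs_of_nonneg (by positivity : (0 : ℤ) ≤ 2 * N + 1)] at hdN
    nlinarith
  rw [sum_Icc_neg_eq_sum_range]
  have : ∀ i : ℕ, Complex.exp (Complex.I * d * (((i : ℤ) - N : ℤ) * (2 * π / (2 * N + 1) : ℝ)))
      = ζ ^ i * Complex.exp (-(Complex.I * d * (N * (2 * π / (2 * N + 1))))) := by
    intro i
    rw [hζ, ← Complex.exp_nat_mul, ← Complex.exp_add]
    congr 1
    push_cast
    field_simp
    ring
  simp_rw [this]
  have hg := mul_geom_sum ζ (2 * N + 1)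
  rw [hζM, sub_self, mul_eq_zero, sub_eq_zero, or_iff_right hζ1] at hg
  rw [← Finset.sum_mul, hg, zero_mul]

/-- Parseval identity for trigonometric polynomials at equispaced nodes. -/
lemma sum_norm_sq_equispaced (N : ℕ) (c : Icc (-(N : ℤ)) (N : ℤ) → ℂ) :
    ∑ j : Icc (-(N : ℤ)) (N : ℤ), ‖∑ k : Icc (-(N : ℤ)) (N : ℤ),
        c k * Complex.exp (Complex.I * (k : ℤ) * ((j : ℤ) * (2 * π / (2 * N + 1) : ℝ)))‖ ^ 2
      = (2 * N + 1) * ∑ k, ‖c k‖ ^ 2 := by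
  have key : ∀ k l : Icc (-(N : ℤ)) (N : ℤ), ∑ j : Icc (-(N : ℤ)) (N : ℤ),
      Complex.exp (Complex.I * ((l : ℤ) - (k : ℤ) : ℤ) * ((j : ℤ) * (2 * π / (2 * N + 1) : ℝ)))
        = if k = l then (2 * N + 1 : ℂ) else 0 := by
    intro k l
    rw [Finset.sum_coe_sort (Icc (-(N : ℤ)) (N : ℤ)) (fun j : ℤ =>
      Complex.exp (Complex.I * ((l : ℤ) - (k : ℤ) : ℤ) * (j * (2 * π / (2 * N + 1) : ℝ))))]
    split_ifs with h
    · simp only [h, sub_self, Int.cast_zero, mul_zero, zero_mul, Complex.exp_zero, sum_const,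
        Int.card_Icc, nsmul_eq_mul, mul_one]
      have : ((N : ℤ) + 1 - -(N : ℤ)).toNat = 2 * N + 1 := by omega
      rw [this]; push_cast; ring
    · refine sum_exp_equispaced_eq_zero (fun h' => h (Subtype.ext (by omega))) ?_
      have hk := Finset.mem_Icc.1 k.2
      have hl := Finset.mem_Icc.1 l.2
      rw [abs_le]; omega
  have conj_exp : ∀ (k j : ℤ), (starRingEnd ℂ) (Complex.exp (Complex.I * k *
      (j * (2 * π / (2 * N + 1) : ℝ)))) = Complex.exp (-(Complex.I * k *
      (j * (2 * π / (2 * N + 1) : ℝ)))) := by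
    intro k j
    rw [← Complex.exp_conj]
    congr 1
    simp only [map_mul, Complex.conj_I, Complex.conj_ofReal, map_intCast]
    ring
  have hC : ((∑ j : Icc (-(N : ℤ)) (N : ℤ), ‖∑ k : Icc (-(N : ℤ)) (N : ℤ),
        c k * Complex.exp (Complex.I * (k : ℤ) * ((j : ℤ) * (2 * π / (2 * N + 1) : ℝ)))‖ ^ 2 : ℝ) : ℂ)
      = (((2 * N + 1) * ∑ k, ‖c k‖ ^ 2 : ℝ) : ℂ) := by
    have e1 : ∀ j : Icc (-(N : ℤ)) (N : ℤ), ((‖∑ k : Icc (-(N : ℤ)) (N : ℤ),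
        c k * Complex.exp (Complex.I * (k : ℤ) * ((j : ℤ) * (2 * π / (2 * N + 1) : ℝ)))‖ : ℝ) : ℂ) ^ 2
        = ∑ k, ∑ l, (starRingEnd ℂ (c k) * c l) * Complex.exp (Complex.I *
          (((l : ℤ) - (k : ℤ) : ℤ) : ℂ) * ((j : ℤ) * (2 * π / (2 * N + 1) : ℝ))) := by
      intro j
      rw [← Complex.conj_mul', map_sum, Finset.sum_mul_sum]
      refine Finset.sum_congr rfl fun k _ => Finset.sum_congr rfl fun l _ => ?_
      rw [map_mul, conj_exp, mul_mul_mul_comm, ← Complex.exp_add]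
      congr 2
      push_cast
      ring
    push_cast [-Complex.ofReal_div] at e1 ⊢
    rw [Finset.sum_congr rfl fun j _ => e1 j, Finset.sum_comm, Finset.mul_sum]
    refine Finset.sum_congr rfl fun k _ => ?_
    rw [Finset.sum_comm]
    simp_rw [← Finset.mul_sum]
    push_cast [-Complex.ofReal_div] at key
    simp_rw [key]
    simp only [mul_ite, mul_zero, Finset.sum_ite_eq, Finset.mem_univ, if_true]
    rw [Complex.conj_mul']
    ring
  exact_mod_cast hC

lemma norm_toLp_mul_le {ι : Type*} [Fintype ι] {r : ℝ} (hr : 0 ≤ r) {p : ι → ℂ}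
    (hp : ∀ i, ‖p i‖ ≤ r) (q : ι → ℂ) :
    ‖WithLp.toLp 2 (fun i => p i * q i)‖ ≤ r * ‖WithLp.toLp 2 q‖ := by
  rw [EuclideanSpace.norm_eq, EuclideanSpace.norm_eq, Real.sqrt_le_left (by positivity), mul_pow,
    Real.sq_sqrt (by positivity), Finset.mul_sum]
  refine Finset.sum_le_sum fun i _ => ?_
  simp only [norm_mul, mul_pow]
  have := hp i
  gcongr

/-- An ℓ² Schur-multiplier bound: if `φ j k = ∑ₘ a m j * u m k` with `‖a m j‖ ≤ b m` and
`‖u m k‖ ≤ 1`, then multiplying the entries of an ℓ²-bounded matrix by `φ` costs at most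
a factor `∑ₘ b m`. -/
lemma norm_schur_multiplier_le {ι κ : Type*} [Fintype ι] [Fintype κ]
    {E φ : ι → κ → ℂ} {a : ℤ → ι → ℂ} {u : ℤ → κ → ℂ} {b : ℤ → ℝ} {B lam : ℝ}
    (hB : 0 ≤ B)
    (hE : ∀ c : κ → ℂ, ‖WithLp.toLp 2 (fun j => ∑ k, c k * E j k)‖ ≤ B * ‖WithLp.toLp 2 c‖)
    (hφ : ∀ j k, HasSum (fun m => a m j * u m k) (φ j k))
    (ha : ∀ m j, ‖a m j‖ ≤ b m) (hb0 : ∀ m, 0 ≤ b m) (hu : ∀ m k, ‖u m k‖ ≤ 1)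
    (hb : HasSum b lam)
    (c : κ → ℂ) :
    ‖WithLp.toLp 2 (fun j => ∑ k, c k * (φ j k * E j k))‖ ≤ lam * (B * ‖WithLp.toLp 2 c‖) := by
  have hsum : HasSum (fun m => WithLp.toLp 2 (fun j => a m j * ∑ k, (u m k * c k) * E j k))
      (WithLp.toLp 2 (fun j => ∑ k, c k * (φ j k * E j k))) := by
    have h1 : HasSum (fun m => (fun j => a m j * ∑ k, (u m k * c k) * E j k))
        (fun j => ∑ k, c k * (φ j k * E j k)) := by
      rw [Pi.hasSum]
      intro j
      have := hasSum_sum (s := Finset.univ) fun k _ => (hφ j k).mul_right (c k * E j k)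
      convert! this using 2 with m
      · rw [Finset.mul_sum]
        exact Finset.sum_congr rfl fun k _ => by ring
      · ring
    exact h1.mapL (PiLp.continuousLinearEquiv 2 ℂ (fun _ : ι => ℂ)).symm.toContinuousLinearMap
  refine hsum.norm_le_of_bounded (hb.mul_right _) fun m => ?_
  calc ‖WithLp.toLp 2 (fun j => a m j * ∑ k, (u m k * c k) * E j k)‖
      ≤ b m * ‖WithLp.toLp 2 (fun j => ∑ k, (u m k * c k) * E j k)‖ :=
        norm_toLp_mul_le (hb0 m) (ha m) _
    _ ≤ b m * (B * ‖WithLp.toLp 2 (fun k => u m k * c k)‖) :=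
        mul_le_mul_of_nonneg_left (hE _) (hb0 m)
    _ ≤ b m * (B * (1 * ‖WithLp.toLp 2 c‖)) :=
        mul_le_mul_of_nonneg_left (mul_le_mul_of_nonneg_left
          (norm_toLp_mul_le zero_le_one (hu m) c) hB) (hb0 m)
    _ = b m * (B * ‖WithLp.toLp 2 c‖) := by rw [one_mul]

/-- Kadec-type lower bound for sampling trigonometric polynomials at perturbed nodes. -/
lemma norm_sample_perturbed_ge {α : ℝ} (hα0 : 0 ≤ α) (hα : α < 1 / 4) {N : ℕ} {x : ℤ → ℝ}
    (hx : PerturbedNodes N α x) (c : Icc (-(N : ℤ)) (N : ℤ) → ℂ) :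
    (cos (π * α) - sin (π * α)) * (√(2 * N + 1) * ‖WithLp.toLp 2 c‖)
      ≤ ‖WithLp.toLp 2 (fun j : Icc (-(N : ℤ)) (N : ℤ) =>
          ∑ k : Icc (-(N : ℤ)) (N : ℤ), c k * Complex.exp (Complex.I * (k : ℤ) * x j))‖ := by
  set h : ℝ := 2 * π / (2 * N + 1) with hh
  have hh0 : 0 < h := by positivity
  set δ : Icc (-(N : ℤ)) (N : ℤ) → ℝ := fun j => (x j - (j : ℤ) * h) / h with hδdef
  have hδ : ∀ j, |δ j| ≤ α := fun j => by
    rw [hδdef]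
    simp only
    rw [abs_div, abs_of_pos hh0, div_le_iff₀ hh0]
    exact hx j j.2
  have hα' : |α| ≤ 1 / 4 := by rw [abs_of_nonneg hα0]; exact hα.le
  set E : Icc (-(N : ℤ)) (N : ℤ) → Icc (-(N : ℤ)) (N : ℤ) → ℂ := fun j k =>
    Complex.exp (Complex.I * (k : ℤ) * ((j : ℤ) * h)) with hEdef
  have hE : ∀ c : Icc (-(N : ℤ)) (N : ℤ) → ℂ,
      ‖WithLp.toLp 2 (fun j => ∑ k, c k * E j k)‖ = √(2 * N + 1) * ‖WithLp.toLp 2 c‖ := by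
    intro c
    rw [EuclideanSpace.norm_eq, EuclideanSpace.norm_eq, ← Real.sqrt_mul (by positivity)]
    congr 1
    exact sum_norm_sq_equispaced N c
  have ht : ∀ k : Icc (-(N : ℤ)) (N : ℤ), ((k : ℤ) : ℝ) * h ∈ Set.Icc (-π) π := by
    intro k
    have hk := Finset.mem_Icc.1 k.2
    have h1 : -(N : ℝ) ≤ ((k : ℤ) : ℝ) := by exact_mod_cast hk.1
    have h2 : ((k : ℤ) : ℝ) ≤ N := by exact_mod_cast hk.2
    have h3 : N * h ≤ π := by
      rw [hh, mul_div_assoc', div_le_iff₀ (by positivity)]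
      nlinarith [pi_pos]
    constructor <;> nlinarith
  have hb1 := hasSum_cosCoeff (hα'.trans_lt (by norm_num))
  have hb2 := hasSum_sinCoeff hα'
  have hexp : ∀ y : ℝ, ‖Complex.exp (Complex.I * y)‖ = 1 := fun y => by
    rw [mul_comm]; exact Complex.norm_exp_ofReal_mul_I y
  have hcos := norm_schur_multiplier_le (E := E)
    (φ := fun j k => 1 - Complex.cos (δ j * (((k : ℤ) : ℝ) * h : ℝ)))
    (a := fun m j => (cosCoeff m (δ j) : ℂ))
    (u := fun m k => cos (m * π) * Complex.exp (Complex.I * m * (((k : ℤ) : ℝ) * h : ℝ)))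
    (Real.sqrt_nonneg _) (fun c => (hE c).le)
    (fun j k => hasSum_one_sub_cos (by linarith [hδ j]) (ht k))
    (fun m j => by
      rw [Complex.norm_real, norm_eq_abs]; exact abs_cosCoeff_le (hδ j) hα.le m)
    (fun m => (abs_nonneg _).trans (abs_cosCoeff_le (abs_of_nonneg hα0).le hα.le m))
    (fun m k => by
      have := hexp (m * (((k : ℤ) : ℝ) * h))
      push_cast at this ⊢
      rw [norm_mul, mul_assoc, this, mul_one, ← Complex.ofReal_intCast, ← Complex.ofReal_mul,
        ← Complex.ofReal_cos, Complex.norm_real]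
      exact abs_cos_le_one _)
    hb1 c
  have hsin := norm_schur_multiplier_le (E := E)
    (φ := fun j k => Complex.I * Complex.sin (δ j * (((k : ℤ) : ℝ) * h : ℝ)))
    (a := fun m j => (sinCoeff m (δ j) : ℂ))
    (u := fun m k => Complex.I * (-(Complex.I * sin ((m - 1 / 2) * π))
      * Complex.exp (Complex.I * (m - 1 / 2) * (((k : ℤ) : ℝ) * h : ℝ))))
    (Real.sqrt_nonneg _) (fun c => (hE c).le)
    (fun j k => by
      simp_rw [mul_left_comm _ Complex.I (_ * _)]
      exact (hasSum_sin ((hδ j).trans hα.le) (ht k)).mul_left _)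
    (fun m j => by
      rw [Complex.norm_real, norm_eq_abs]; exact abs_sinCoeff_le (hδ j) hα.le m)
    (fun m => (abs_nonneg _).trans (abs_sinCoeff_le (abs_of_nonneg hα0).le hα.le m))
    (fun m k => by
      have h1 := hexp ((m - 1 / 2) * (((k : ℤ) : ℝ) * h))
      have h2 : Complex.I * (m - 1 / 2) * (((k : ℤ) : ℝ) * h : ℝ)
        = Complex.I * (((m - 1 / 2) * (((k : ℤ) : ℝ) * h) : ℝ) : ℂ) := by push_cast; ring
      rw [h2, norm_mul, norm_mul, norm_neg, norm_mul, Complex.norm_I, one_mul, one_mul, h1, mul_one,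
        Complex.norm_real]
      exact abs_sin_le_one _)
    hb2 c
  have hdecomp : WithLp.toLp 2 (fun j => ∑ k, c k * E j k)
      = WithLp.toLp 2 (fun j : Icc (-(N : ℤ)) (N : ℤ) =>
          ∑ k : Icc (-(N : ℤ)) (N : ℤ), c k * Complex.exp (Complex.I * (k : ℤ) * x j))
        + (WithLp.toLp 2 (fun j => ∑ k : Icc (-(N : ℤ)) (N : ℤ),
            c k * ((1 - Complex.cos (δ j * (((k : ℤ) : ℝ) * h : ℝ))) * E j k))
        - WithLp.toLp 2 (fun j => ∑ k : Icc (-(N : ℤ)) (N : ℤ),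
            c k * ((Complex.I * Complex.sin (δ j * (((k : ℤ) : ℝ) * h : ℝ))) * E j k))) := by
    ext j
    simp only [PiLp.add_apply, PiLp.sub_apply]
    rw [← Finset.sum_sub_distrib, ← Finset.sum_add_distrib]
    refine Finset.sum_congr rfl fun k _ => ?_
    have hxj : x j = (j : ℤ) * h + δ j * h := by
      rw [hδdef]; simp only; field_simp; ring
    have he : Complex.exp (Complex.I * (k : ℤ) * x j)
        = E j k * (Complex.cos (δ j * (((k : ℤ) : ℝ) * h : ℝ))
          + Complex.sin (δ j * (((k : ℤ) : ℝ) * h : ℝ)) * Complex.I) := by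
      rw [← Complex.exp_mul_I, hEdef, ← Complex.exp_add, hxj]
      congr 1
      push_cast
      ring
    rw [he]
    ring
  have hn := hE c
  rw [hdecomp] at hn
  have h1 := norm_add_le (WithLp.toLp 2 (fun j : Icc (-(N : ℤ)) (N : ℤ) =>
          ∑ k : Icc (-(N : ℤ)) (N : ℤ), c k * Complex.exp (Complex.I * (k : ℤ) * x j)))
        (WithLp.toLp 2 (fun j => ∑ k : Icc (-(N : ℤ)) (N : ℤ),
            c k * ((1 - Complex.cos (δ j * (((k : ℤ) : ℝ) * h : ℝ))) * E j k))
        - WithLp.toLp 2 (fun j => ∑ k : Icc (-(N : ℤ)) (N : ℤ),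
            c k * ((Complex.I * Complex.sin (δ j * (((k : ℤ) : ℝ) * h : ℝ))) * E j k)))
  have h2 := norm_sub_le (WithLp.toLp 2 (fun j => ∑ k : Icc (-(N : ℤ)) (N : ℤ),
            c k * ((1 - Complex.cos (δ j * (((k : ℤ) : ℝ) * h : ℝ))) * E j k)))
        (WithLp.toLp 2 (fun j => ∑ k : Icc (-(N : ℤ)) (N : ℤ),
            c k * ((Complex.I * Complex.sin (δ j * (((k : ℤ) : ℝ) * h : ℝ))) * E j k)))
  linarith

lemma integral_trigPoly (N : ℕ) (c : ℤ → ℂ) :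
    ∫ t in (-π)..π, ∑ k ∈ Icc (-(N : ℤ)) (N : ℤ), c k * Complex.exp (Complex.I * (k : ℂ) * (t : ℂ))
      = 2 * π * c 0 := by
  rw [intervalIntegral.integral_finsetSum fun k _ =>
    Continuous.intervalIntegrable (by fun_prop) _ _]
  rw [Finset.sum_eq_single 0]
  · simp [← two_mul]
  · intro k _ hk
    have hk' : (k : ℝ) ≠ 0 := by exact_mod_cast hk
    have := integral_exp_I_mul_eq_sinc k
    rw [Complex.ofReal_intCast] at this
    rw [intervalIntegral.integral_const_mul, this, sinc_of_ne_zero (by positivity),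
      mul_comm π (k : ℝ), sin_int_mul_pi]
    simp
  · intro h; simp at h

lemma sin_lt_cos_pi_mul {α : ℝ} (hα0 : 0 ≤ α) (hα : α < 1 / 4) : sin (π * α) < cos (π * α) := by
  have hπ := pi_pos
  rw [← cos_pi_div_two_sub]
  exact cos_lt_cos_of_nonneg_of_le_pi (by positivity) (by nlinarith) (by nlinarith)

/-- The absolute sum of the weights of an exact quadrature rule at `α`-perturbed nodes with
`α < 1/4` is bounded independently of the number of nodes. -/
lemma sum_abs_weights_le {α : ℝ} (hα0 : 0 ≤ α) (hα : α < 1 / 4) {N : ℕ} {x w : ℤ → ℝ}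
    (hx : PerturbedNodes N α x) (hw : ExactQuad N x w) :
    (cos (π * α) - sin (π * α)) * ∑ j ∈ Icc (-(N : ℤ)) (N : ℤ), |w j| ≤ 2 * π := by
  have hκ : 0 < cos (π * α) - sin (π * α) := sub_pos.2 (sin_lt_cos_pi_mul hα0 hα)
  have hM : 0 < √(2 * N + 1 : ℝ) := Real.sqrt_pos.2 (by positivity)
  let L : (Icc (-(N : ℤ)) (N : ℤ) → ℂ) →ₗ[ℂ] (Icc (-(N : ℤ)) (N : ℤ) → ℂ) :=
    { toFun := fun c j => ∑ k : Icc (-(N : ℤ)) (N : ℤ),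
        c k * Complex.exp (Complex.I * (k : ℤ) * x j)
      map_add' := fun c d => by
        ext j; simp only [Pi.add_apply, add_mul, Finset.sum_add_distrib]
      map_smul' := fun r c => by
        ext j; simp only [Pi.smul_apply, smul_eq_mul, mul_assoc, Finset.mul_sum, RingHom.id_apply] }
  have hL : Function.Injective L := by
    rw [injective_iff_map_eq_zero]
    intro c hc
    have h1 := norm_sample_perturbed_ge hα0 hα hx c
    change _ ≤ ‖WithLp.toLp 2 (L c)‖ at h1
    rw [hc, WithLp.toLp_zero, norm_zero] at h1
    have h2 : ‖WithLp.toLp 2 c‖ ≤ 0 := by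
      by_contra hpos
      push Not at hpos
      exact absurd h1 (not_le.2 (by positivity))
    simpa using norm_le_zero_iff.1 h2
  obtain ⟨c, hc⟩ := (LinearMap.injective_iff_surjective.1 hL)
    (fun j => ((SignType.sign (w j) : ℝ) : ℂ))
  have hbound := norm_sample_perturbed_ge hα0 hα hx c
  change _ ≤ ‖WithLp.toLp 2 (L c)‖ at hbound
  have hVc : ‖WithLp.toLp 2 (L c)‖ ≤ √(2 * N + 1) := by
    rw [hc, EuclideanSpace.norm_eq]
    refine Real.sqrt_le_sqrt ?_
    calc ∑ j : Icc (-(N : ℤ)) (N : ℤ), ‖((SignType.sign (w j) : ℝ) : ℂ)‖ ^ 2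
        ≤ ∑ j : Icc (-(N : ℤ)) (N : ℤ), (1 : ℝ) := by
          refine Finset.sum_le_sum fun j _ => ?_
          rw [Complex.norm_real]
          rcases SignType.sign (w j) with _ | _ | _ <;> simp
      _ = 2 * N + 1 := by
          simp only [sum_const, card_univ, Fintype.card_coe, Int.card_Icc, nsmul_eq_mul, mul_one]
          have : ((N : ℤ) + 1 - -(N : ℤ)).toNat = 2 * N + 1 := by omega
          rw [this]; push_cast; ring
  have hcn : (cos (π * α) - sin (π * α)) * ‖WithLp.toLp 2 c‖ ≤ 1 := by
    have := hbound.trans hVc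
    refine le_of_mul_le_mul_right ?_ hM
    linarith
  have h0 : (0 : ℤ) ∈ Icc (-(N : ℤ)) (N : ℤ) := by simp
  have hc0 : ‖c ⟨0, h0⟩‖ ≤ ‖WithLp.toLp 2 c‖ := PiLp.norm_apply_le (WithLp.toLp 2 c) ⟨0, h0⟩
  set c' : ℤ → ℂ := fun k => if hk : k ∈ Icc (-(N : ℤ)) (N : ℤ) then c ⟨k, hk⟩ else 0 with hc'
  have hq := hw (fun t => ∑ k ∈ Icc (-(N : ℤ)) (N : ℤ),
    c' k * Complex.exp (Complex.I * (k : ℂ) * (t : ℂ))) ⟨c', fun _ => rfl⟩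
  rw [integral_trigPoly] at hq
  have hsum : ∑ j ∈ Icc (-(N : ℤ)) (N : ℤ), (w j : ℂ) * ∑ k ∈ Icc (-(N : ℤ)) (N : ℤ),
      c' k * Complex.exp (Complex.I * (k : ℂ) * (x j : ℂ))
      = ((∑ j ∈ Icc (-(N : ℤ)) (N : ℤ), |w j| : ℝ) : ℂ) := by
    rw [Complex.ofReal_sum]
    refine Finset.sum_congr rfl fun j hj => ?_
    have h1 : ∑ k ∈ Icc (-(N : ℤ)) (N : ℤ), c' k * Complex.exp (Complex.I * (k : ℂ) * (x j : ℂ))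
        = L c ⟨j, hj⟩ := by
      rw [← Finset.sum_coe_sort]
      refine Finset.sum_congr rfl fun k _ => ?_
      simp only [hc', k.2, dif_pos]
    rw [h1, hc, ← Complex.ofReal_mul, self_mul_sign]
  rw [hsum] at hq
  have hc'0 : c' 0 = c ⟨0, h0⟩ := by simp only [hc', h0, dif_pos]
  have hnorm := congrArg norm hq
  rw [Complex.norm_real, norm_eq_abs, abs_of_nonneg (Finset.sum_nonneg fun _ _ => abs_nonneg _),
    hc'0, norm_mul, norm_mul, Complex.norm_real, norm_eq_abs, abs_of_pos pi_pos,
    Complex.norm_two] at hnorm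
  rw [hnorm]
  have : (cos (π * α) - sin (π * α)) * ‖c ⟨0, h0⟩‖ ≤ 1 :=
    (mul_le_mul_of_nonneg_left hc0 hκ.le).trans hcn
  nlinarith [pi_pos]

lemma IsTrigPoly.mono {N M : ℕ} (h : N ≤ M) {q : ℝ → ℂ} (hq : IsTrigPoly N q) :
    IsTrigPoly M q := by
  obtain ⟨c, hc⟩ := hq
  refine ⟨fun k => if k ∈ Icc (-(N : ℤ)) (N : ℤ) then c k else 0, fun x => ?_⟩
  rw [hc]
  simp only [ite_mul, zero_mul]
  rw [← Finset.sum_filter]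
  refine Finset.sum_congr ?_ fun _ _ => rfl
  ext k
  simp only [Finset.mem_filter, Finset.mem_Icc]
  omega

lemma IsTrigPoly.add {N : ℕ} {p q : ℝ → ℂ} (hp : IsTrigPoly N p) (hq : IsTrigPoly N q) :
    IsTrigPoly N (fun x => p x + q x) := by
  obtain ⟨c, hc⟩ := hp
  obtain ⟨d, hd⟩ := hq
  refine ⟨fun k => c k + d k, fun x => ?_⟩
  simp only [hc, hd, add_mul, Finset.sum_add_distrib]

lemma IsTrigPoly.const_mul {N : ℕ} {p : ℝ → ℂ} (a : ℂ) (hp : IsTrigPoly N p) :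
    IsTrigPoly N (fun x => a * p x) := by
  obtain ⟨c, hc⟩ := hp
  refine ⟨fun k => a * c k, fun x => ?_⟩
  simp only [hc, mul_assoc, Finset.mul_sum]

lemma IsTrigPoly.continuous {N : ℕ} {p : ℝ → ℂ} (hp : IsTrigPoly N p) : Continuous p := by
  obtain ⟨c, hc⟩ := hp
  rw [funext hc]
  fun_prop

lemma exists_isTrigPoly_of_mem_span_fourier {g : C(AddCircle (2 * π), ℂ)}
    (hg : g ∈ Submodule.span ℂ (Set.range (@fourier (2 * π)))) :
    ∃ N : ℕ, IsTrigPoly N (fun x : ℝ => g x) := by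
  induction hg using Submodule.span_induction with
  | mem g hg =>
    obtain ⟨n, rfl⟩ := hg
    refine ⟨n.natAbs, fun k => if k = n then 1 else 0, fun x => ?_⟩
    have hn : n ∈ Icc (-(n.natAbs : ℤ)) (n.natAbs : ℤ) := by
      simp only [Finset.mem_Icc]; omega
    simp only [ite_mul, one_mul, zero_mul, Finset.sum_ite_eq', if_pos hn]
    rw [fourier_coe_apply]
    congr 1
    have : (π : ℂ) ≠ 0 := by exact_mod_cast pi_ne_zero
    push_cast
    field_simp
  | zero => exact ⟨0, 0, fun x => by simp⟩
  | add f g _ _ hf hg =>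
    obtain ⟨N, hN⟩ := hf
    obtain ⟨M, hM⟩ := hg
    exact ⟨max N M, (hN.mono (le_max_left _ _)).add (hM.mono (le_max_right _ _))⟩
  | smul a f _ hf =>
    obtain ⟨N, hN⟩ := hf
    exact ⟨N, hN.const_mul a⟩

/-- Trigonometric polynomials are uniformly dense in the continuous `2π`-periodic functions. -/
lemma exists_isTrigPoly_norm_sub_lt {f : ℝ → ℂ} (hfc : Continuous f)
    (hfp : Function.Periodic f (2 * π)) {ε : ℝ} (hε : 0 < ε) :
    ∃ (N : ℕ) (p : ℝ → ℂ), IsTrigPoly N p ∧ ∀ x, ‖f x - p x‖ < ε := by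
  have hT : Fact (0 < 2 * π) := ⟨by positivity⟩
  let F : C(AddCircle (2 * π), ℂ) := ⟨hfp.lift, continuous_coinduced_dom.2 hfc⟩
  have hF : F ∈ (Submodule.span ℂ (Set.range (@fourier (2 * π)))).topologicalClosure := by
    rw [span_fourier_closure_eq_top]; trivial
  rw [← SetLike.mem_coe, Submodule.topologicalClosure_coe, Metric.mem_closure_iff] at hF
  obtain ⟨g, hg, hd⟩ := hF ε hε
  obtain ⟨N, hN⟩ := exists_isTrigPoly_of_mem_span_fourier hg
  refine ⟨N, _, hN, fun x => ?_⟩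
  rw [← dist_eq_norm]
  exact (ContinuousMap.dist_apply_le_dist (f := F) (g := g) (x : AddCircle (2 * π))).trans_lt hd

/-- quadrature rules at α-perturbed nodes (α < 1/4) converge for every
continuous 2π-periodic function. -/
theorem quadrature_converges (α : ℝ) (hα0 : 0 ≤ α) (hα : α < 1/4)
    (x : ℕ → ℤ → ℝ) (w : ℕ → ℤ → ℝ)
    (hx : ∀ N : ℕ, 0 < N → PerturbedNodes N α (x N))
    (hw : ∀ N : ℕ, 0 < N → ExactQuad N (x N) (w N))
    (f : ℝ → ℂ) (hfc : Continuous f) (hfp : Function.Periodic f (2*π)) :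
    Filter.Tendsto
      (fun N : ℕ => ∑ j ∈ Finset.Icc (-(N:ℤ)) (N:ℤ), (w N j : ℂ) * f (x N j))
      Filter.atTop (nhds (∫ t in (-π)..π, f t)) := by
  set κ := cos (π * α) - sin (π * α) with hκdef
  have hκ : 0 < κ := sub_pos.2 (sin_lt_cos_pi_mul hα0 hα)
  have hπ := pi_pos
  rw [Metric.tendsto_atTop]
  intro ε hε
  set η := ε / (2 * (2 * π / κ + 2 * π)) with hη
  have hC : 0 < 2 * π / κ + 2 * π := by positivity
  have hη0 : 0 < η := by positivity
  obtain ⟨N₀, p, hp, hfp⟩ := exists_isTrigPoly_norm_sub_lt hfc hfp hη0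
  refine ⟨max N₀ 1, fun N hN => ?_⟩
  have hN0 : 0 < N := lt_of_lt_of_le one_pos ((le_max_right _ _).trans hN)
  have hq := hw N hN0 p (hp.mono ((le_max_left _ _).trans hN))
  have hW := sum_abs_weights_le hα0 hα (hx N hN0) (hw N hN0)
  rw [← hκdef, mul_comm, ← le_div_iff₀ hκ] at hW
  have h1 : ‖∑ j ∈ Finset.Icc (-(N:ℤ)) (N:ℤ), (w N j : ℂ) * (f (x N j) - p (x N j))‖
      ≤ 2 * π / κ * η := by
    calc _ ≤ ∑ j ∈ Finset.Icc (-(N:ℤ)) (N:ℤ), |w N j| * η := by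
          refine norm_sum_le_of_le _ fun j _ => ?_
          rw [norm_mul, Complex.norm_real, norm_eq_abs]
          exact mul_le_mul_of_nonneg_left (hfp _).le (abs_nonneg _)
      _ ≤ _ := by
          rw [← Finset.sum_mul]
          exact mul_le_mul_of_nonneg_right hW hη0.le
  have h2 : ‖∫ t in (-π)..π, (f t - p t)‖ ≤ 2 * π * η := by
    have := intervalIntegral.norm_integral_le_of_norm_le_const (a := -π) (b := π)
      (f := fun t => f t - p t) (C := η) fun t _ => (hfp t).le
    rw [abs_of_pos (by linarith)] at this
    linarith
  have h3 : ∑ j ∈ Finset.Icc (-(N:ℤ)) (N:ℤ), (w N j : ℂ) * f (x N j) - ∫ t in (-π)..π, f t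
      = ∑ j ∈ Finset.Icc (-(N:ℤ)) (N:ℤ), (w N j : ℂ) * (f (x N j) - p (x N j))
        - ∫ t in (-π)..π, (f t - p t) := by
    rw [intervalIntegral.integral_sub (hfc.intervalIntegrable _ _)
      (hp.continuous.intervalIntegrable _ _), ← hq]
    simp only [mul_sub, Finset.sum_sub_distrib]
    ring
  rw [dist_eq_norm, h3]
  calc _ ≤ 2 * π / κ * η + 2 * π * η := (norm_sub_le _ _).trans (add_le_add h1 h2)
    _ = ε / 2 := by rw [hη]; field_simp
    _ < ε := by linarith
end

section
/- Let 0 ≤ α < 1/4 and α < α₀ < 1/2. Then there exists a constant C > 0, depending only on α and α₀, such that for every positive integer N, every set of α-perturbed nodes x̃_{−N},…,x̃_N, and every continuous 2π-periodic function f: ℝ → ℂ, the interpolant q̃_N ∈ T_N with q̃_N(x̃_j) = f(x̃_j) for all −N ≤ j ≤ N satisfies ‖f − q̃_N‖_{L^∞[−π,π)} ≤ C N^{2α₀} · min_{q ∈ T_N} ‖f − q‖_{L^∞[−π,π)}. -/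
open Real Finset

/-- The supremum of `‖g‖` over `[−π, π)`. -/
noncomputable def supIco (g : ℝ → ℂ) : ℝ :=
  ⨆ x : Set.Ico (-π) π, ‖g x‖

/-- The point `e^{it}` of the unit circle. -/
noncomputable def unitExp (t : ℝ) : ℂ := Complex.exp (t * Complex.I)

lemma norm_unitExp (t : ℝ) : ‖unitExp t‖ = 1 := Complex.norm_exp_ofReal_mul_I t

lemma unitExp_ne_zero (t : ℝ) : unitExp t ≠ 0 := Complex.exp_ne_zero _

lemma unitExp_add (s t : ℝ) : unitExp (s + t) = unitExp s * unitExp t := by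
  simp only [unitExp, ← Complex.exp_add]
  congr 1
  push_cast
  ring

lemma unitExp_sum {ι : Type*} (s : Finset ι) (t : ι → ℝ) :
    unitExp (∑ i ∈ s, t i) = ∏ i ∈ s, unitExp (t i) := by
  simp only [unitExp, ← Complex.exp_sum, Complex.ofReal_sum, Finset.sum_mul]

lemma unitExp_pow (t : ℝ) (n : ℕ) : unitExp t ^ n = unitExp (n * t) := by
  simp only [unitExp, ← Complex.exp_nat_mul]
  congr 1
  push_cast
  ring

lemma unitExp_sub_unitExp (a b : ℝ) :
    unitExp a - unitExp b
      = unitExp ((a + b) / 2) * (2 * Complex.I * (Real.sin ((a - b) / 2) : ℝ)) := by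
  have ha : unitExp a = unitExp ((a + b) / 2) * unitExp ((a - b) / 2) := by
    rw [← unitExp_add]; congr 1; ring
  have hb : unitExp b = unitExp ((a + b) / 2) * unitExp (-((a - b) / 2)) := by
    rw [← unitExp_add]; congr 1; ring
  rw [ha, hb]
  simp only [unitExp, Complex.exp_mul_I, Complex.ofReal_neg, Complex.cos_neg, Complex.sin_neg,
    Complex.ofReal_sin]
  ring

lemma unitExp_add_one (a : ℝ) :
    unitExp a + 1 = unitExp (a / 2) * (2 * (Real.cos (a / 2) : ℝ)) := by
  have ha : unitExp a = unitExp (a / 2) * unitExp (a / 2) := by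
    rw [← unitExp_add]; congr 1; ring
  have h1 : (1 : ℂ) = unitExp (a / 2) * unitExp (-(a / 2)) := by
    rw [← unitExp_add, add_neg_cancel]; simp [unitExp]
  rw [ha, h1, ← mul_add]
  simp only [unitExp, Complex.exp_mul_I, Complex.ofReal_neg, Complex.cos_neg, Complex.sin_neg,
    Complex.ofReal_cos]
  ring

lemma norm_sq_smul_unitExp_sub (r a b : ℝ) :
    ‖r * unitExp a - unitExp b‖ ^ 2 = (1 - r) ^ 2 + r * (4 * Real.sin ((a - b) / 2) ^ 2) := by
  have h4 : 4 * Real.sin ((a - b) / 2) ^ 2 = 2 - 2 * Real.cos (a - b) := by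
    rw [Real.sin_sq_eq_half_sub, mul_div_cancel₀ _ two_ne_zero]; ring
  rw [h4, ← Complex.normSq_eq_norm_sq, Complex.normSq_apply, Real.cos_sub]
  simp only [unitExp, Complex.sub_re, Complex.sub_im, Complex.re_ofReal_mul,
    Complex.im_ofReal_mul, Complex.exp_ofReal_mul_I_re, Complex.exp_ofReal_mul_I_im]
  linear_combination r ^ 2 * Real.sin_sq_add_cos_sq a + Real.sin_sq_add_cos_sq b

lemma smul_unitExp_ne_unitExp {r : ℝ} (hr0 : 0 ≤ r) (hr1 : r < 1) (a b : ℝ) :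
    (r : ℂ) * unitExp a ≠ unitExp b := by
  intro h
  have := congrArg norm h
  rw [norm_mul, norm_unitExp, norm_unitExp, Complex.norm_of_nonneg hr0] at this
  linarith

lemma norm_smul_unitExp_sub_pos {r : ℝ} (hr0 : 0 ≤ r) (hr1 : r < 1) (a b : ℝ) :
    0 < ‖r * unitExp a - unitExp b‖ :=
  norm_pos_iff.2 (sub_ne_zero.2 (smul_unitExp_ne_unitExp hr0 hr1 a b))

/-! ### Trigonometric polynomials and Lagrange interpolation -/

lemma IsTrigPoly.sub {N : ℕ} {p q : ℝ → ℂ} (hp : IsTrigPoly N p) (hq : IsTrigPoly N q) :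
    IsTrigPoly N (fun t => p t - q t) := by
  obtain ⟨c, hc⟩ := hp
  obtain ⟨d, hd⟩ := hq
  exact ⟨fun k => c k - d k, fun x => by simp only [hc, hd, ← Finset.sum_sub_distrib, sub_mul]⟩

lemma IsTrigPoly.continuous_s14 {N : ℕ} {q : ℝ → ℂ} (hq : IsTrigPoly N q) : Continuous q := by
  obtain ⟨c, hc⟩ := hq
  rw [funext hc]
  fun_prop

lemma IsTrigPoly.periodic {N : ℕ} {q : ℝ → ℂ} (hq : IsTrigPoly N q) :
    Function.Periodic q (2 * π) := by
  obtain ⟨c, hc⟩ := hq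
  intro x
  rw [hc, hc]
  refine Finset.sum_congr rfl fun k _ => ?_
  congr 1
  rw [Complex.exp_eq_exp_iff_exists_int]
  exact ⟨k, by push_cast; ring⟩

lemma card_Icc_neg_natCast (N : ℕ) : #(Finset.Icc (-(N : ℤ)) (N : ℤ)) = 2 * N + 1 := by
  rw [Int.card_Icc]; omega

/-- A trigonometric polynomial of degree `N` agrees, up to a unimodular factor, with an algebraic
polynomial of degree at most `2N` on the unit circle. -/
lemma IsTrigPoly.exists_polynomial {N : ℕ} {q : ℝ → ℂ} (hq : IsTrigPoly N q) :
    ∃ p : Polynomial ℂ, p.degree < (2 * N + 1 : ℕ) ∧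
      ∀ t, p.eval (unitExp t) = unitExp t ^ N * q t := by
  obtain ⟨c, hc⟩ := hq
  refine ⟨∑ k ∈ Finset.Icc (-(N : ℤ)) (N : ℤ), Polynomial.C (c k) * Polynomial.X ^ (k + N).toNat,
    ?_, fun t => ?_⟩
  · refine (Polynomial.degree_sum_le _ _).trans_lt ?_
    rw [Finset.sup_lt_iff (by exact WithBot.bot_lt_coe _)]
    intro k hk
    rw [Finset.mem_Icc] at hk
    refine (Polynomial.degree_C_mul_X_pow_le _ _).trans_lt ?_
    norm_cast
    omega
  · rw [Polynomial.eval_finsetSum, hc, Finset.mul_sum]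
    refine Finset.sum_congr rfl fun k hk => ?_
    rw [Finset.mem_Icc] at hk
    have hcast : (((k + N).toNat : ℕ) : ℂ) = k + N := by
      rw [← Int.cast_natCast (R := ℂ), Int.toNat_of_nonneg (by omega)]
      push_cast
      rfl
    simp only [Polynomial.eval_mul, Polynomial.eval_C, Polynomial.eval_pow, Polynomial.eval_X,
      unitExp, ← Complex.exp_nat_mul]
    rw [hcast, mul_left_comm (Complex.exp _), ← Complex.exp_add]
    congr 2
    ring

lemma IsTrigPoly.norm_le_sum_lagrange {N : ℕ} {q : ℝ → ℂ} (hq : IsTrigPoly N q) {x : ℤ → ℝ}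
    (hx : Set.InjOn (fun j => unitExp (x j)) (Finset.Icc (-(N : ℤ)) (N : ℤ))) (y : ℝ) :
    ‖q y‖ ≤ ∑ j ∈ Finset.Icc (-(N : ℤ)) (N : ℤ), ‖q (x j)‖ *
      ((∏ k ∈ (Finset.Icc (-(N : ℤ)) (N : ℤ)).erase j, ‖unitExp y - unitExp (x k)‖) /
        ∏ k ∈ (Finset.Icc (-(N : ℤ)) (N : ℤ)).erase j, ‖unitExp (x j) - unitExp (x k)‖) := by
  obtain ⟨p, hdeg, hp⟩ := hq.exists_polynomial
  have hval : ∀ t, ‖q t‖ = ‖p.eval (unitExp t)‖ := fun t => by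
    rw [hp, norm_mul, norm_pow, norm_unitExp, one_pow, one_mul]
  rw [← card_Icc_neg_natCast] at hdeg
  have hlag := Lagrange.eq_interpolate hx hdeg
  rw [hval y, hlag, Lagrange.interpolate_apply, Polynomial.eval_finsetSum]
  refine (norm_sum_le _ _).trans (Finset.sum_le_sum fun j _ => ?_)
  rw [Polynomial.eval_mul, Polynomial.eval_C, norm_mul, ← hval, Lagrange.basis,
    Polynomial.eval_prod, norm_prod, ← Finset.prod_div_distrib]
  gcongr with k
  simp [Lagrange.basisDivisor, div_eq_inv_mul]

/-! ### Perturbed nodes -/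

lemma PerturbedNodes.exists_delta {N : ℕ} {α : ℝ} {x : ℤ → ℝ} (hx : PerturbedNodes N α x) {j : ℤ}
    (hj : j ∈ Finset.Icc (-(N : ℤ)) (N : ℤ)) :
    ∃ δ : ℝ, |δ| ≤ α ∧ x j = (j + δ) * (2 * π / (2 * N + 1)) := by
  have h := hx j hj
  have hh : 0 < 2 * π / (2 * N + 1) := by positivity
  refine ⟨x j / (2 * π / (2 * N + 1)) - j, ?_, by field_simp; ring⟩
  rw [← mul_le_mul_iff_left₀ hh]
  refine le_trans (le_of_eq ?_) h
  rw [← abs_of_pos hh, ← abs_mul, abs_of_pos hh]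
  congr 1
  field_simp

lemma PerturbedNodes.half_sub_mem_Ioo {N : ℕ} {α : ℝ} (hα : α < 1 / 2) {x : ℤ → ℝ}
    (hx : PerturbedNodes N α x) {j k : ℤ} (hj : j ∈ Finset.Icc (-(N : ℤ)) (N : ℤ))
    (hk : k ∈ Finset.Icc (-(N : ℤ)) (N : ℤ)) (hkj : k < j) :
    (x j - x k) / 2 ∈ Set.Ioo 0 π := by
  obtain ⟨δ, hδ, hxj⟩ := hx.exists_delta hj
  obtain ⟨ε, hε, hxk⟩ := hx.exists_delta hk
  rw [abs_le] at hδ hε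
  rw [Finset.mem_Icc] at hj hk
  have h1 : (k : ℝ) + 1 ≤ j := by exact_mod_cast hkj
  have h2 : (j : ℝ) ≤ N := by exact_mod_cast hj.2
  have h3 : -(N : ℝ) ≤ k := by exact_mod_cast hk.1
  have heq : (x j - x k) / 2 = (j + δ - (k + ε)) / (2 * N + 1) * π := by
    rw [hxj, hxk]; field_simp
  have hN : (0 : ℝ) < 2 * N + 1 := by positivity
  rw [heq]
  constructor
  · exact mul_pos (div_pos (by linarith) hN) pi_pos
  · refine mul_lt_of_lt_one_left pi_pos ?_
    rw [div_lt_one hN]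
    linarith

lemma PerturbedNodes.injOn_unitExp {N : ℕ} {α : ℝ} (hα : α < 1 / 2) {x : ℤ → ℝ}
    (hx : PerturbedNodes N α x) :
    Set.InjOn (fun j => unitExp (x j)) (Finset.Icc (-(N : ℤ)) (N : ℤ)) := by
  have key : ∀ j ∈ Finset.Icc (-(N : ℤ)) (N : ℤ), ∀ k ∈ Finset.Icc (-(N : ℤ)) (N : ℤ), k < j →
      unitExp (x j) ≠ unitExp (x k) := by
    intro j hj k hk hkj h
    have hs := Real.sin_pos_of_mem_Ioo (hx.half_sub_mem_Ioo hα hj hk hkj)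
    rw [← sub_eq_zero, unitExp_sub_unitExp] at h
    simp only [mul_eq_zero, unitExp_ne_zero, Complex.I_ne_zero, two_ne_zero, false_or,
      Complex.ofReal_eq_zero] at h
    exact hs.ne' h
  intro j hj k hk h
  rcases lt_trichotomy j k with hlt | heq | hlt
  · exact absurd h.symm (key k hk j hj hlt)
  · exact heq
  · exact absurd h (key j hj k hk hlt)

lemma perturbedNodes_uniform (N : ℕ) :
    PerturbedNodes N 0 (fun j => j * (2 * π / (2 * N + 1))) := by
  intro j _
  simp

lemma prod_sub_unitExp_uniform (N : ℕ) (w : ℂ) :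
    ∏ k ∈ Finset.Icc (-(N : ℤ)) (N : ℤ), (w - unitExp (k * (2 * π / (2 * N + 1))))
      = w ^ (2 * N + 1) - 1 := by
  have hinj := (perturbedNodes_uniform N).injOn_unitExp (by norm_num)
  have hpoly : Lagrange.nodal (Finset.Icc (-(N : ℤ)) (N : ℤ))
      (fun k : ℤ => unitExp (k * (2 * π / (2 * N + 1))))
      = Polynomial.X ^ (2 * N + 1) - Polynomial.C 1 := by
    have hd : (Polynomial.X ^ (2 * N + 1) - Polynomial.C (1 : ℂ)).degree
        = ((2 * N + 1 : ℕ) : WithBot ℕ) :=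
      Polynomial.degree_X_pow_sub_C (by omega) _
    refine Polynomial.eq_of_degree_le_of_eval_index_eq _ hinj ?_ ?_ ?_ ?_
    · rw [Lagrange.degree_nodal]
    · rw [Lagrange.degree_nodal, card_Icc_neg_natCast, hd]
    · rw [Lagrange.nodal_monic, (Polynomial.monic_X_pow_sub_C _ (by omega)).leadingCoeff]
    · intro k hk
      refine (Lagrange.eval_nodal_at_node
        (v := fun k : ℤ => unitExp (k * (2 * π / (2 * N + 1)))) hk).trans ?_
      simp only [Polynomial.eval_sub, Polynomial.eval_pow, Polynomial.eval_X, Polynomial.eval_C]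
      rw [unitExp_pow, eq_comm, sub_eq_zero]
      rw [unitExp, Complex.exp_eq_one_iff]
      refine ⟨k, ?_⟩
      have : (2 * (N : ℂ) + 1) ≠ 0 := by exact_mod_cast (by omega : 2 * N + 1 ≠ 0)
      push_cast
      field_simp
  have := congrArg (Polynomial.eval w) hpoly
  simpa [Lagrange.eval_nodal] using this

/-! ### A positive partial fraction expansion -/

lemma pow_add_one_div_nodal {ι : Type*} [DecidableEq ι] {s : Finset ι} {v : ι → ℂ}
    (hv : Set.InjOn v s) (hs : s.Nonempty) {w : ℂ} (hw : ∀ i ∈ s, w ≠ v i) :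
    (w ^ #s + 1) / ∏ i ∈ s, (w - v i)
      = 1 + ∑ i ∈ s, Lagrange.nodalWeight s v i * (w - v i)⁻¹ * (v i ^ #s + 1) := by
  have hcard : #s ≠ 0 := Finset.card_ne_zero.2 hs
  have hd : (Polynomial.X ^ #s + Polynomial.C (1 : ℂ)).degree = ((#s : ℕ) : WithBot ℕ) :=
    Polynomial.degree_X_pow_add_C (Nat.pos_of_ne_zero hcard) _
  have hdeg : (Polynomial.X ^ #s + Polynomial.C (1 : ℂ) - Lagrange.nodal s v).degree
      < ((#s : ℕ) : WithBot ℕ) := by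
    rw [← hd]
    refine Polynomial.degree_sub_lt_left ?_ ?_ ?_
    · rw [hd, Lagrange.degree_nodal]
    · exact (Polynomial.monic_X_pow_add_C _ hcard).ne_zero
    · rw [Lagrange.nodal_monic, (Polynomial.monic_X_pow_add_C _ hcard).leadingCoeff]
  have hlag := Lagrange.eq_interpolate_of_eval_eq (fun i => v i ^ #s + 1) hv hdeg fun i hi => by
    simp [Lagrange.eval_nodal_at_node hi]
  have heval := congrArg (Polynomial.eval w) hlag
  rw [Lagrange.eval_interpolate_not_at_node _ hw] at heval
  simp only [Polynomial.eval_sub, Polynomial.eval_add, Polynomial.eval_pow, Polynomial.eval_X,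
    Polynomial.eval_C, Lagrange.eval_nodal] at heval
  have hne : ∏ i ∈ s, (w - v i) ≠ 0 := Finset.prod_ne_zero_iff.2 fun i hi => sub_ne_zero.2 (hw i hi)
  rw [div_eq_iff hne]
  linear_combination heval

lemma half_add_re_div_sub {w z : ℂ} (hz : ‖z‖ = 1) (hwz : w ≠ z) :
    1 / 2 + (z / (w - z)).re = -(1 / 2) * ((1 - ‖w‖ ^ 2) / ‖w - z‖ ^ 2) := by
  have hz' : z.re * z.re + z.im * z.im = 1 := by
    rw [← Complex.normSq_apply, Complex.normSq_eq_norm_sq, hz, one_pow]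
  have hpos : Complex.normSq (w - z) ≠ 0 := by
    simpa [Complex.normSq_eq_zero, sub_eq_zero] using hwz
  rw [Complex.div_re, ← Complex.normSq_eq_norm_sq, ← Complex.normSq_eq_norm_sq]
  field_simp
  simp only [Complex.normSq_apply, Complex.sub_re, Complex.sub_im] at *
  linear_combination -hz'

/-- If the residues of `(w ^ n + 1) / ∏ (w - v i)` have, after division by `v i`, a common
direction `c`, then they satisfy a Poisson-kernel estimate. -/
lemma sum_mul_poisson_le {ι : Type*} [DecidableEq ι] {s : Finset ι} {v : ι → ℂ}
    (hv : Set.InjOn v s) (hs : s.Nonempty) (hnorm : ∀ i ∈ s, ‖v i‖ = 1) {c : ℂ} (hc : ‖c‖ = 1)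
    {ρ : ι → ℝ} (hρ : ∀ i ∈ s, Lagrange.nodalWeight s v i * (v i ^ #s + 1) = c * ρ i * v i)
    (hprod : (∏ i ∈ s, (0 - v i)) * c ^ 2 = -1) {w : ℂ} (hw : ‖w‖ < 1) :
    ∑ i ∈ s, ρ i * ((1 - ‖w‖ ^ 2) / ‖w - v i‖ ^ 2)
      ≤ 2 * ‖(w ^ #s + 1) / ∏ i ∈ s, (w - v i)‖ := by
  have hcard : #s ≠ 0 := Finset.card_ne_zero.2 hs
  have hcc : (starRingEnd ℂ) c * c = 1 := by
    rw [mul_comm, Complex.mul_conj, Complex.normSq_eq_norm_sq, hc]; norm_num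
  have hexp : ∀ w : ℂ, ‖w‖ < 1 → (starRingEnd ℂ) c * ((w ^ #s + 1) / ∏ i ∈ s, (w - v i))
      = (starRingEnd ℂ) c + ∑ i ∈ s, (ρ i : ℂ) * (v i / (w - v i)) := by
    intro w hw
    rw [pow_add_one_div_nodal hv hs fun i hi h => by rw [h, hnorm i hi] at hw; exact lt_irrefl _ hw,
      mul_add, mul_one, Finset.mul_sum]
    congr 1
    refine Finset.sum_congr rfl fun i hi => ?_
    rw [mul_right_comm, hρ i hi, div_eq_mul_inv]
    linear_combination (ρ i * v i * (w - v i)⁻¹) * hcc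
  have hsum : ∑ i ∈ s, ρ i = 2 * c.re := by
    have h0 := hexp 0 (by simp)
    have hP : (∏ i ∈ s, (0 - v i))⁻¹ = -c ^ 2 := by
      refine inv_eq_of_mul_eq_one_right ?_
      linear_combination -hprod
    rw [zero_pow hcard, zero_add, one_div, hP] at h0
    have hterm : ∑ i ∈ s, (ρ i : ℂ) * (v i / (0 - v i)) = -∑ i ∈ s, (ρ i : ℂ) := by
      rw [← Finset.sum_neg_distrib]
      refine Finset.sum_congr rfl fun i hi => ?_
      have : v i ≠ 0 := by
        intro h
        have := hnorm i hi
        simp [h] at this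
      rw [zero_sub, div_neg, div_self this, mul_neg, mul_one]
    rw [hterm] at h0
    have h1 : ∑ i ∈ s, (ρ i : ℂ) = (starRingEnd ℂ) c + c := by
      linear_combination h0 + c * hcc
    have h2 := congrArg Complex.re h1
    simp only [Complex.re_sum, Complex.ofReal_re, Complex.add_re, Complex.conj_re] at h2
    linarith
  have hre := congrArg Complex.re (hexp w hw)
  rw [Complex.add_re, Complex.conj_re, Complex.re_sum] at hre
  have hre2 : ∑ i ∈ s, ρ i * ((1 - ‖w‖ ^ 2) / ‖w - v i‖ ^ 2)
      = -2 * ((starRingEnd ℂ) c * ((w ^ #s + 1) / ∏ i ∈ s, (w - v i))).re := by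
    rw [hre]
    have : c.re = ∑ i ∈ s, ρ i * (1 / 2) := by rw [← Finset.sum_mul, hsum]; ring
    rw [this, ← Finset.sum_add_distrib, Finset.mul_sum]
    refine Finset.sum_congr rfl fun i hi => ?_
    rw [Complex.re_ofReal_mul, ← mul_add, half_add_re_div_sub (hnorm i hi)]
    · ring
    · intro h
      rw [h, hnorm i hi] at hw
      exact lt_irrefl _ hw
  rw [hre2]
  have hle := (abs_le.1 (Complex.abs_re_le_norm
    ((starRingEnd ℂ) c * ((w ^ #s + 1) / ∏ i ∈ s, (w - v i))))).1
  rw [norm_mul, RCLike.norm_conj, hc, one_mul] at hle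
  linarith

lemma PerturbedNodes.prod_sin_eq {N : ℕ} {α : ℝ} (hα : α < 1 / 2) {x : ℤ → ℝ}
    (hx : PerturbedNodes N α x) {j : ℤ} (hj : j ∈ Finset.Icc (-(N : ℤ)) (N : ℤ)) :
    ∏ k ∈ (Finset.Icc (-(N : ℤ)) (N : ℤ)).erase j, Real.sin ((x j - x k) / 2)
      = (-1) ^ ((N : ℤ) - j) *
        ∏ k ∈ (Finset.Icc (-(N : ℤ)) (N : ℤ)).erase j, |Real.sin ((x j - x k) / 2)| := by
  have hterm : ∀ k ∈ (Finset.Icc (-(N : ℤ)) (N : ℤ)).erase j, Real.sin ((x j - x k) / 2)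
      = (if j < k then (-1) else 1) * |Real.sin ((x j - x k) / 2)| := by
    intro k hk
    rw [Finset.mem_erase] at hk
    rcases lt_or_gt_of_ne hk.1 with h | h
    · rw [if_neg h.not_gt, one_mul,
        abs_of_pos (Real.sin_pos_of_mem_Ioo (hx.half_sub_mem_Ioo hα hj hk.2 h))]
    · have := Real.sin_pos_of_mem_Ioo (hx.half_sub_mem_Ioo hα hk.2 hj h)
      have hneg : (x j - x k) / 2 = -((x k - x j) / 2) := by ring
      rw [if_pos h, hneg, Real.sin_neg, abs_neg, abs_of_pos this]
      ring
  rw [Finset.prod_congr rfl hterm, Finset.prod_mul_distrib]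
  congr 1
  rw [Finset.prod_ite, Finset.prod_const, Finset.prod_const_one, mul_one]
  rw [Finset.mem_Icc] at hj
  have hset : ((Finset.Icc (-(N : ℤ)) (N : ℤ)).erase j).filter (fun k => j < k)
      = Finset.Ioc j N := by
    ext k
    simp only [Finset.mem_filter, Finset.mem_erase, Finset.mem_Icc, Finset.mem_Ioc]
    omega
  rw [hset, Int.card_Ioc, ← zpow_natCast, Int.toNat_of_nonneg (by omega)]

lemma PerturbedNodes.cos_eq {N : ℕ} {α : ℝ} (hα : α < 1 / 2) {x : ℤ → ℝ}
    (hx : PerturbedNodes N α x) {j : ℤ} (hj : j ∈ Finset.Icc (-(N : ℤ)) (N : ℤ)) :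
    ∃ b : ℝ, Real.cos (π * α) ≤ b ∧ Real.cos ((2 * N + 1) * x j / 2) = (-1) ^ j * b := by
  obtain ⟨δ, hδ, hxj⟩ := hx.exists_delta hj
  refine ⟨Real.cos (π * δ), ?_, ?_⟩
  · rw [← Real.cos_abs (π * δ), abs_mul, abs_of_pos pi_pos]
    have h0 := abs_nonneg δ
    refine Real.cos_le_cos_of_nonneg_of_le_pi (by positivity) ?_ (by gcongr)
    nlinarith [pi_pos]
  · have : (2 * N + 1) * x j / 2 = π * δ + j * π := by
      rw [hxj]; field_simp; ring
    rw [this, Real.cos_add_int_mul_pi]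

lemma norm_unitExp_sub (a b : ℝ) :
    ‖unitExp a - unitExp b‖ = 2 * |Real.sin ((a - b) / 2)| := by
  rw [unitExp_sub_unitExp, norm_mul, norm_unitExp, one_mul, norm_mul, norm_mul, Complex.norm_I,
    Complex.norm_real, Real.norm_eq_abs]
  norm_num

lemma PerturbedNodes.sum_poisson_le {N : ℕ} {α : ℝ} (hα : α < 1 / 2) {x : ℤ → ℝ}
    (hx : PerturbedNodes N α x) {r : ℝ} (hr0 : 0 ≤ r) (hr1 : r < 1) (y : ℝ) :
    ∑ j ∈ Finset.Icc (-(N : ℤ)) (N : ℤ),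
      2 * Real.cos (π * α) /
        (∏ k ∈ (Finset.Icc (-(N : ℤ)) (N : ℤ)).erase j, ‖unitExp (x j) - unitExp (x k)‖) *
        ((1 - r ^ 2) / ‖r * unitExp y - unitExp (x j)‖ ^ 2)
      ≤ 4 / ∏ k ∈ Finset.Icc (-(N : ℤ)) (N : ℤ), ‖r * unitExp y - unitExp (x k)‖ := by
  set s := Finset.Icc (-(N : ℤ)) (N : ℤ) with hs
  have hcard : #s = 2 * N + 1 := card_Icc_neg_natCast N
  set S := ∑ k ∈ s, x k with hS
  choose! b hb hcos using fun j (hj : j ∈ s) => hx.cos_eq hα hj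
  have hinj := hx.injOn_unitExp hα
  let ρ : ℤ → ℝ := fun j => 2 * b j / ∏ k ∈ s.erase j, ‖unitExp (x j) - unitExp (x k)‖
  have hprodpos : ∀ j ∈ s, 0 < ∏ k ∈ s.erase j, ‖unitExp (x j) - unitExp (x k)‖ := by
    intro j hj
    refine Finset.prod_pos fun k hk => norm_pos_iff.2 (sub_ne_zero.2 fun h => ?_)
    rw [Finset.mem_erase] at hk
    exact hk.1 (hinj hj hk.2 h).symm
  have hw : ‖(r : ℂ) * unitExp y‖ = r := by
    rw [norm_mul, norm_unitExp, mul_one, Complex.norm_of_nonneg hr0]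
  have key := sum_mul_poisson_le (s := s) (v := fun j => unitExp (x j)) (c := unitExp (-S / 2))
    (ρ := ρ) (w := r * unitExp y) hinj (by rw [← Finset.card_pos, hcard]; omega)
    (fun _ _ => norm_unitExp _) (norm_unitExp _) ?_ ?_ (by rwa [hw])
  · rw [hw] at key
    calc _ ≤ ∑ j ∈ s, ρ j * ((1 - r ^ 2) / ‖r * unitExp y - unitExp (x j)‖ ^ 2) := by
          refine Finset.sum_le_sum fun j hj => ?_
          have h1 : 0 ≤ 1 - r ^ 2 := by nlinarith
          have h2 := hprodpos j hj
          have h3 := hb j hj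
          simp only [ρ]
          gcongr
      _ ≤ _ := key
      _ ≤ 2 * (2 / ∏ k ∈ s, ‖r * unitExp y - unitExp (x k)‖) := by
          rw [norm_div, norm_prod]
          gcongr
          refine (norm_add_le _ _).trans ?_
          rw [norm_pow, hw, norm_one]
          have := pow_le_one₀ (n := #s) hr0 hr1.le
          linarith
      _ = _ := by ring
  · intro j hj
    have hj' := hj
    rw [hs, Finset.mem_Icc] at hj'
    have hnorm : ∏ k ∈ s.erase j, ‖unitExp (x j) - unitExp (x k)‖
        = 4 ^ N * ∏ k ∈ s.erase j, |Real.sin ((x j - x k) / 2)| := by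
      simp only [norm_unitExp_sub, Finset.prod_mul_distrib, Finset.prod_const,
        Finset.card_erase_of_mem hj, hcard]
      rw [Nat.add_sub_cancel, pow_mul]
      norm_num
    have hdiff : ∏ k ∈ s.erase j, (unitExp (x j) - unitExp (x k))
        = unitExp ((2 * N + 1) * x j / 2 - x j + S / 2) * ((-1) ^ j *
          ((∏ k ∈ s.erase j, ‖unitExp (x j) - unitExp (x k)‖ : ℝ) : ℂ)) := by
      have hsin : (∏ k ∈ s.erase j, ((Real.sin ((x j - x k) / 2) : ℝ) : ℂ))
          = (-1) ^ ((N : ℤ) - j) *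
            ((∏ k ∈ s.erase j, |Real.sin ((x j - x k) / 2)| : ℝ) : ℂ) := by
        have := congrArg (fun t : ℝ => (t : ℂ)) (hx.prod_sin_eq hα hj)
        push_cast at this ⊢
        exact this
      have hsum : ∑ k ∈ s.erase j, (x j + x k) / 2 = (2 * N + 1) * x j / 2 - x j + S / 2 := by
        rw [← Finset.sum_div, Finset.sum_add_distrib, Finset.sum_const,
          Finset.card_erase_of_mem hj, hcard, Finset.sum_erase_eq_sub hj, ← hS,
          Nat.add_sub_cancel, nsmul_eq_mul]
        push_cast
        ring
      have hpow : ((2 : ℂ) * Complex.I) ^ (2 * N) = (-1) ^ N * 4 ^ N := by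
        rw [pow_mul, mul_pow, Complex.I_sq, ← mul_pow]; norm_num
      have hsign : (-1 : ℂ) ^ ((N : ℤ) - j) = (-1) ^ N * (-1) ^ j := by
        rw [zpow_sub₀ (by norm_num), zpow_natCast, div_eq_mul_inv, ← inv_zpow]
        norm_num
      have hsq : ((-1 : ℂ) ^ N) * (-1) ^ N = 1 := by rw [← mul_pow]; norm_num
      simp only [unitExp_sub_unitExp (x j)]
      rw [Finset.prod_mul_distrib, Finset.prod_mul_distrib, Finset.prod_const,
        Finset.card_erase_of_mem hj, hcard, Nat.add_sub_cancel, ← unitExp_sum, hsum, hsin, hpow,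
        hsign]
      simp only [← unitExp_sub_unitExp (x j)]
      rw [hnorm]
      push_cast
      linear_combination (unitExp ((2 * N + 1) * x j / 2 - x j + S / 2) * 4 ^ N * (-1) ^ j *
        ∏ k ∈ s.erase j, ((|Real.sin ((x j - x k) / 2)| : ℝ) : ℂ)) * hsq
    have hQ : unitExp (x j) ^ #s + 1
        = unitExp ((2 * N + 1) * x j / 2) * (2 * ((-1) ^ j * (b j : ℂ))) := by
      rw [hcard, unitExp_pow, unitExp_add_one]
      push_cast
      have := congrArg (fun t : ℝ => (t : ℂ)) (hcos j hj)
      push_cast at this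
      rw [this]
    have hne : ((∏ k ∈ s.erase j, ‖unitExp (x j) - unitExp (x k)‖ : ℝ) : ℂ) ≠ 0 := by
      exact_mod_cast (hprodpos j hj).ne'
    have hexp : unitExp ((2 * N + 1) * x j / 2)
        = unitExp ((2 * N + 1) * x j / 2 - x j + S / 2) * unitExp (-S / 2) * unitExp (x j) := by
      rw [← unitExp_add, ← unitExp_add]; congr 1; ring
    have hsgn : ((-1 : ℂ) ^ j) ≠ 0 := zpow_ne_zero _ (by norm_num)
    have hu := unitExp_ne_zero ((2 * N + 1) * x j / 2 - x j + S / 2)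
    rw [Lagrange.nodalWeight, Finset.prod_inv_distrib, hdiff, hQ, hexp]
    simp only [ρ]
    rw [Complex.ofReal_div]
    push_cast at hne ⊢
    generalize unitExp ((2 * N + 1) * x j / 2 - x j + S / 2) = u at hu
    generalize unitExp (-S / 2) = c
    field_simp
  · simp only [zero_sub]
    rw [Finset.prod_neg, hcard, ← unitExp_sum, ← hS, unitExp_pow, pow_succ, pow_mul]
    have : unitExp S * unitExp ((2 : ℕ) * (-S / 2)) = 1 := by
      rw [← unitExp_add]
      have : S + (2 : ℕ) * (-S / 2) = 0 := by push_cast; ring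
      rw [this]
      simp [unitExp]
    rw [neg_one_sq, one_pow]
    linear_combination (-1 : ℂ) * this

/-! ### Comparison with the uniform nodes -/

/-- The logarithmic sensitivity of the distance from `r * e^{iθ}` to `1` under perturbation of
the angle. -/
noncomputable def sensitivity (r θ : ℝ) : ℝ :=
  |Real.cos (θ / 2)| / √((1 - r) ^ 2 / r + 4 * Real.sin (θ / 2) ^ 2)

lemma sensitivity_nonneg (r θ : ℝ) : 0 ≤ sensitivity r θ := by
  unfold sensitivity; positivity

lemma sensitivity_add_two_pi (r θ : ℝ) : sensitivity r (θ + 2 * π) = sensitivity r θ := by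
  have : (θ + 2 * π) / 2 = θ / 2 + π := by ring
  simp [sensitivity, this, Real.cos_add_pi, Real.sin_add_pi]

lemma two_abs_sin_half_le (θ δ : ℝ) :
    2 * |Real.sin ((θ - δ) / 2)| ≤ 2 * |Real.sin (θ / 2)| + |δ| * |Real.cos (θ / 2)| := by
  have h1 : (θ - δ) / 2 = θ / 2 - δ / 2 := by ring
  have h2 : |Real.sin (δ / 2)| ≤ |δ| / 2 := by
    have := Real.abs_sin_le_abs (x := δ / 2)
    rwa [abs_div, abs_two] at this
  rw [h1, Real.sin_sub]
  have h3 := abs_sub (Real.sin (θ / 2) * Real.cos (δ / 2)) (Real.cos (θ / 2) * Real.sin (δ / 2))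
  rw [abs_mul, abs_mul] at h3
  have h4 := mul_le_mul_of_nonneg_left (Real.abs_cos_le_one (δ / 2)) (abs_nonneg (Real.sin (θ / 2)))
  have h5 := mul_le_mul_of_nonneg_left h2 (abs_nonneg (Real.cos (θ / 2)))
  linarith

lemma norm_smul_unitExp_sub_le {r : ℝ} (hr0 : 0 < r) (hr1 : r < 1) (y a b : ℝ) :
    ‖r * unitExp y - unitExp b‖
      ≤ (1 + |b - a| * sensitivity r (y - a)) * ‖r * unitExp y - unitExp a‖ := by
  have hη : 0 ≤ 1 + |b - a| * sensitivity r (y - a) := by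
    have := sensitivity_nonneg r (y - a); positivity
  have hr' : 0 < 1 - r := by linarith
  refine le_of_sq_le_sq ?_ (by positivity)
  have hp := two_abs_sin_half_le (y - a) (b - a)
  rw [sub_sub_sub_cancel_right] at hp
  have hq : 0 < √((1 - r) ^ 2 / r + 4 * Real.sin ((y - a) / 2) ^ 2) := by positivity
  have hq2 : √((1 - r) ^ 2 / r + 4 * Real.sin ((y - a) / 2) ^ 2) ^ 2
      = (1 - r) ^ 2 / r + 4 * Real.sin ((y - a) / 2) ^ 2 := Real.sq_sqrt (by positivity)
  rw [mul_pow, norm_sq_smul_unitExp_sub, norm_sq_smul_unitExp_sub, sensitivity]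
  have hX : ∀ u : ℝ, (1 - r) ^ 2 + r * (4 * u ^ 2) = r * ((1 - r) ^ 2 / r + (2 * |u|) ^ 2) := by
    intro u
    rw [mul_pow, sq_abs]
    field_simp
    ring
  have hXa : (1 - r) ^ 2 + r * (4 * Real.sin ((y - a) / 2) ^ 2)
      = r * √((1 - r) ^ 2 / r + 4 * Real.sin ((y - a) / 2) ^ 2) ^ 2 := by
    rw [hq2]
    field_simp
  rw [hXa, hX]
  have hpq : 2 * |Real.sin ((y - a) / 2)|
      ≤ √((1 - r) ^ 2 / r + 4 * Real.sin ((y - a) / 2) ^ 2) := by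
    refine Real.le_sqrt_of_sq_le ?_
    rw [mul_pow, sq_abs]
    have : 0 ≤ (1 - r) ^ 2 / r := by positivity
    linarith
  have hq3 : (1 - r) ^ 2 / r = √((1 - r) ^ 2 / r + 4 * Real.sin ((y - a) / 2) ^ 2) ^ 2
      - (2 * |Real.sin ((y - a) / 2)|) ^ 2 := by
    rw [hq2, mul_pow, sq_abs]; ring
  have hp0 : 0 ≤ 2 * |Real.sin ((y - a) / 2)| := by positivity
  have hpb : 0 ≤ 2 * |Real.sin ((y - b) / 2)| := by positivity
  have ht0 : 0 ≤ |b - a| * |Real.cos ((y - a) / 2)| := by positivity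
  rw [← mul_div_assoc]
  generalize √((1 - r) ^ 2 / r + 4 * Real.sin ((y - a) / 2) ^ 2) = q at *
  generalize 2 * |Real.sin ((y - a) / 2)| = p at *
  generalize 2 * |Real.sin ((y - b) / 2)| = p' at *
  generalize |b - a| * |Real.cos ((y - a) / 2)| = t at *
  rw [hq3]
  have hrhs : (1 + t / q) ^ 2 * (r * q ^ 2) = r * (q + t) ^ 2 := by field_simp
  rw [hrhs]
  gcongr
  nlinarith

lemma norm_mul_norm_le {r₀ r : ℝ} (hr : 0 < r) (hrr : r ≤ r₀) (hr1 : r₀ < 1) (y a b : ℝ) :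
    ‖r₀ * unitExp y - unitExp b‖ * ‖r * unitExp y - unitExp a‖
      ≤ (1 + |b - a| * sensitivity r₀ (y - a)) *
        (‖r₀ * unitExp y - unitExp a‖ * ‖r * unitExp y - unitExp b‖) := by
  have hη : 0 ≤ |b - a| * sensitivity r₀ (y - a) := by
    have := sensitivity_nonneg r₀ (y - a); positivity
  rcases le_total (Real.sin ((y - a) / 2) ^ 2) (Real.sin ((y - b) / 2) ^ 2) with h | h
  · have h1 := norm_smul_unitExp_sub_le (hr.trans_le hrr) hr1 y a b
    have h2 : ‖r * unitExp y - unitExp a‖ ≤ ‖r * unitExp y - unitExp b‖ := by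
      refine le_of_sq_le_sq ?_ (norm_nonneg _)
      rw [norm_sq_smul_unitExp_sub, norm_sq_smul_unitExp_sub]
      gcongr
    calc _ ≤ _ := mul_le_mul h1 h2 (norm_nonneg _) (by positivity)
      _ = _ := by ring
  · have h1 : ‖r₀ * unitExp y - unitExp b‖ * ‖r * unitExp y - unitExp a‖
        ≤ ‖r₀ * unitExp y - unitExp a‖ * ‖r * unitExp y - unitExp b‖ := by
      refine le_of_sq_le_sq ?_ (by positivity)
      rw [mul_pow, mul_pow, norm_sq_smul_unitExp_sub, norm_sq_smul_unitExp_sub,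
        norm_sq_smul_unitExp_sub, norm_sq_smul_unitExp_sub]
      have h2 : (1 - r₀) ^ 2 * r ≤ (1 - r) ^ 2 * r₀ := by
        have : (1 - r₀) ^ 2 ≤ (1 - r) ^ 2 := pow_le_pow_left₀ (by linarith) (by linarith) 2
        gcongr
      nlinarith [mul_le_mul_of_nonneg_right h2 (sub_nonneg.2 h)]
    calc _ ≤ _ := h1
      _ ≤ _ := le_mul_of_one_le_left (by positivity) (by linarith)

lemma sum_comp_add_eq_of_periodic {M : Type*} [AddCommMonoid M] (N : ℕ) {F : ℤ → M}
    (hF : ∀ k, F (k + (2 * N + 1)) = F k) (m : ℤ) :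
    ∑ k ∈ Finset.Icc (-(N : ℤ)) (N : ℤ), F (k + m) = ∑ k ∈ Finset.Icc (-(N : ℤ)) (N : ℤ), F k := by
  have step : ∀ m : ℤ, ∑ k ∈ Finset.Icc (-(N : ℤ)) (N : ℤ), F (k + (m + 1))
      = ∑ k ∈ Finset.Icc (-(N : ℤ)) (N : ℤ), F (k + m) := by
    intro m
    refine Finset.sum_nbij' (fun k => if k = N then -(N : ℤ) else k + 1)
      (fun k => if k = -(N : ℤ) then (N : ℤ) else k - 1) ?_ ?_ ?_ ?_ ?_
    · intro k hk
      rw [Finset.mem_Icc] at *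
      split_ifs <;> omega
    · intro k hk
      rw [Finset.mem_Icc] at *
      split_ifs <;> omega
    · intro k hk
      rw [Finset.mem_Icc] at hk
      split_ifs <;> omega
    · intro k hk
      rw [Finset.mem_Icc] at hk
      split_ifs <;> omega
    · intro k hk
      split_ifs with h
      · rw [← hF (-(N : ℤ) + m), h]
        congr 1
        ring
      · congr 1
        ring
  induction m using Int.induction_on with
  | zero => simp
  | succ i ih => rw [step, ih]
  | pred i ih =>
    rw [← ih, ← step]
    simp

lemma abs_cos_half_mul_le {θ : ℝ} (hθ : |θ| ≤ π) :
    |Real.cos (θ / 2)| * |θ| ≤ 2 * |Real.sin (θ / 2)| := by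
  have hc : |Real.cos (θ / 2)| = Real.cos (|θ| / 2) := by
    rw [← Real.cos_abs (θ / 2), abs_div, abs_two]
    refine abs_of_nonneg (Real.cos_nonneg_of_mem_Icc ⟨?_, ?_⟩) <;>
      linarith [abs_nonneg θ, pi_pos]
  have hs : |Real.sin (θ / 2)| = Real.sin (|θ| / 2) := by
    rw [Real.abs_sin_eq_sin_abs_of_abs_le_pi, abs_div, abs_two]
    rw [abs_div, abs_two]
    linarith [abs_nonneg θ]
  rw [hc, hs]
  rcases hθ.eq_or_lt with h | h
  · rw [h, Real.cos_pi_div_two, Real.sin_pi_div_two]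
    norm_num
  · have h0 := abs_nonneg θ
    have htan := Real.le_tan (x := |θ| / 2) (by linarith) (by linarith)
    have hcos : 0 < Real.cos (|θ| / 2) := Real.cos_pos_of_mem_Ioo ⟨by linarith, by linarith⟩
    rw [Real.tan_eq_sin_div_cos, le_div_iff₀ hcos] at htan
    linarith

lemma sensitivity_le_inv {r θ : ℝ} (hr : 0 < r) (hr1 : r < 1) (hθ : |θ| ≤ π) (hθ0 : θ ≠ 0) :
    sensitivity r θ ≤ 1 / |θ| := by
  have hpos : 0 < |θ| := abs_pos.2 hθ0
  have hB : 0 < (1 - r) ^ 2 / r := by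
    have : 0 < 1 - r := by linarith
    positivity
  have hsq : 0 < √((1 - r) ^ 2 / r + 4 * Real.sin (θ / 2) ^ 2) := by positivity
  rw [sensitivity, div_le_div_iff₀ hsq hpos, one_mul]
  refine (abs_cos_half_mul_le hθ).trans (Real.le_sqrt_of_sq_le ?_)
  rw [mul_pow, sq_abs]
  linarith

lemma sensitivity_le_inv_one_sub {r : ℝ} (hr : 0 < r) (hr1 : r < 1) (θ : ℝ) :
    sensitivity r θ ≤ 1 / (1 - r) := by
  have h1 : 0 < 1 - r := by linarith
  refine div_le_div₀ zero_le_one (Real.abs_cos_le_one _) h1 (Real.le_sqrt_of_sq_le ?_)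
  have : (1 - r) ^ 2 ≤ (1 - r) ^ 2 / r := le_div_self (by positivity) hr hr1.le
  nlinarith [sq_nonneg (Real.sin (θ / 2))]

lemma sum_inv_add_half_le (N : ℕ) :
    ∑ i ∈ Finset.range (N + 1), 1 / ((i : ℝ) + 1 / 2) ≤ 3 + Real.log (N + 1 : ℕ) := by
  have h : ∑ i ∈ Finset.range (N + 1), 1 / ((i : ℝ) + 1 / 2) ≤ 2 + (harmonic N : ℝ) := by
    induction N with
    | zero => norm_num
    | succ N ih =>
      rw [Finset.sum_range_succ, harmonic_succ]
      push_cast at ih ⊢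
      have : 1 / ((N : ℝ) + 1 + 1 / 2) ≤ ((N : ℝ) + 1)⁻¹ := by
        rw [one_div]
        exact inv_anti₀ (by positivity) (by linarith)
      linarith
  have h2 := harmonic_le_one_add_log N
  have h3 : Real.log N ≤ Real.log (N + 1 : ℕ) := by
    rcases N.eq_zero_or_pos with rfl | hN
    · simp
    · exact Real.log_le_log (by exact_mod_cast hN) (by push_cast; linarith)
  linarith

lemma sum_Icc_neg_le {ψ : ℤ → ℝ} {φ : ℕ → ℝ} (N : ℕ)
    (h : ∀ i < N, ψ (i + 1) ≤ φ i ∧ ψ (-(i + 1)) ≤ φ i) :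
    ∑ l ∈ Finset.Icc (-(N : ℤ)) (N : ℤ), ψ l ≤ ψ 0 + 2 * ∑ i ∈ Finset.range N, φ i := by
  induction N with
  | zero => simp
  | succ N ih =>
    have hset : Finset.Icc (-((N + 1 : ℕ) : ℤ)) ((N + 1 : ℕ) : ℤ)
        = insert ((N : ℤ) + 1) (insert (-((N : ℤ) + 1)) (Finset.Icc (-(N : ℤ)) (N : ℤ))) := by
      ext k
      simp only [Finset.mem_insert, Finset.mem_Icc]
      omega
    rw [hset, Finset.sum_insert (by simp; omega), Finset.sum_insert (by simp),
      Finset.sum_range_succ]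
    have h1 := ih fun i hi => h i (by omega)
    have h2 := h N (by omega)
    linarith

lemma sum_sensitivity_le {N : ℕ} (hN : 0 < N) {r : ℝ} (hr : 0 < r) (hr1 : r < 1) (y : ℝ) :
    ∑ k ∈ Finset.Icc (-(N : ℤ)) (N : ℤ),
        2 * π / (2 * N + 1) * sensitivity r (y - k * (2 * π / (2 * N + 1)))
      ≤ 2 * π / (2 * N + 1) / (1 - r) + 2 * (3 + Real.log N) := by
  set h := 2 * π / (2 * N + 1) with hh
  have hpos : 0 < h := by positivity
  have hπ : (N + 1 / 2) * h = π := by rw [hh]; field_simp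
  set m := round (y / h) with hm
  have hρ : |y - m * h| ≤ h / 2 := by
    have h1 := abs_sub_round (y / h)
    have h2 : y - m * h = (y / h - m) * h := by field_simp
    rw [h2, abs_mul, abs_of_pos hpos]
    nlinarith
  rw [← sum_comp_add_eq_of_periodic N (F := fun k : ℤ => h * sensitivity r (y - k * h)) ?_ m]
  · have hb : ∀ l : ℤ, ∀ i : ℕ, i < N → |(l : ℝ)| = i + 1 →
        h * sensitivity r (y - ((l + m : ℤ) : ℝ) * h) ≤ 1 / ((i : ℝ) + 1 / 2) := by
      intro l i hi hl
      have heq : y - ((l + m : ℤ) : ℝ) * h = (y - m * h) - l * h := by push_cast; ring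
      have hlh : |(l : ℝ) * h| = (i + 1) * h := by rw [abs_mul, hl, abs_of_pos hpos]
      have hlow : (i + 1 / 2) * h ≤ |(y - m * h) - l * h| := by
        have := abs_sub_abs_le_abs_sub ((l : ℝ) * h) (y - m * h)
        rw [abs_sub_comm ((l : ℝ) * h)] at this
        linarith
      have hiN : (i : ℝ) + 1 ≤ N := by exact_mod_cast hi
      have hupp : |(y - m * h) - l * h| ≤ π := by
        have := abs_sub (y - m * h) ((l : ℝ) * h)
        nlinarith
      have hpos2 : 0 < (i + 1 / 2) * h := by positivity
      have hs := sensitivity_le_inv hr hr1 hupp (abs_pos.1 (hpos2.trans_le hlow))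
      rw [heq]
      calc _ ≤ h * (1 / ((i + 1 / 2) * h)) := by
            gcongr
            exact hs.trans (one_div_le_one_div_of_le hpos2 hlow)
        _ = _ := by field_simp
    refine (sum_Icc_neg_le (φ := fun i => 1 / ((i : ℝ) + 1 / 2)) N fun i hi => ⟨?_, ?_⟩).trans ?_
    · refine hb _ i hi ?_
      push_cast
      exact abs_of_nonneg (by positivity)
    · refine hb _ i hi ?_
      push_cast
      rw [abs_neg]
      exact abs_of_nonneg (by positivity)
    · gcongr
      · calc _ ≤ h * (1 / (1 - r)) := by
              gcongr; exact sensitivity_le_inv_one_sub hr hr1 _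
          _ = _ := by ring
      · obtain ⟨n, rfl⟩ : ∃ n, N = n + 1 := ⟨N - 1, by omega⟩
        exact sum_inv_add_half_le n
  · intro k
    have : y - ((k + (2 * N + 1) : ℤ) : ℝ) * h + 2 * π = y - k * h := by
      push_cast
      linarith
    rw [← this, sensitivity_add_two_pi]

/-- Radial growth of the node polynomial: the ratio of its moduli at `r₀ * e^{iy}` and
`r * e^{iy}`, for `1 - r₀` comparable with the mesh width. -/
lemma PerturbedNodes.prod_norm_le {N : ℕ} (hN : 0 < N) {α : ℝ} (hα : 0 ≤ α) {x : ℤ → ℝ}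
    (hx : PerturbedNodes N α x) {r₀ r : ℝ} (hr₀ : r₀ = 1 - 1 / (2 * (2 * N + 1))) (hr : 0 < r)
    (hrr : r ≤ r₀) (y : ℝ) :
    ∏ k ∈ Finset.Icc (-(N : ℤ)) (N : ℤ), ‖r₀ * unitExp y - unitExp (x k)‖
      ≤ 6 * Real.exp (α * (4 * π + 6)) * (N : ℝ) ^ (2 * α) *
        ∏ k ∈ Finset.Icc (-(N : ℤ)) (N : ℤ), ‖r * unitExp y - unitExp (x k)‖ := by
  have hN1 : (1 : ℝ) ≤ N := by exact_mod_cast hN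
  have hr1 : r₀ < 1 := by rw [hr₀]; linarith [show (0 : ℝ) < 1 / (2 * (2 * N + 1)) by positivity]
  have hr00 : 0 < r₀ := hr.trans_le hrr
  set s := Finset.Icc (-(N : ℤ)) (N : ℤ) with hs
  set h : ℝ := 2 * π / (2 * N + 1) with hh
  have hpos : 0 < h := by positivity
  have hunif : ∀ ρ : ℝ, ∏ k ∈ s, ‖ρ * unitExp y - unitExp (k * h)‖
      = ‖((ρ : ℂ) * unitExp y) ^ (2 * N + 1) - 1‖ := fun ρ => by
    rw [← norm_prod, prod_sub_unitExp_uniform]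
  have hnorm : ∀ ρ : ℝ, 0 ≤ ρ → ‖((ρ : ℂ) * unitExp y) ^ (2 * N + 1)‖ = ρ ^ (2 * N + 1) :=
    fun ρ hρ => by rw [norm_pow, norm_mul, norm_unitExp, mul_one, Complex.norm_of_nonneg hρ]
  have hnum : ∏ k ∈ s, ‖r₀ * unitExp y - unitExp (k * h)‖ ≤ 2 := by
    rw [hunif]
    refine (norm_sub_le _ _).trans ?_
    rw [hnorm _ hr00.le, norm_one]
    linarith [pow_le_one₀ hr00.le hr1.le (n := 2 * N + 1)]
  have hden : 1 / 3 ≤ ∏ k ∈ s, ‖r * unitExp y - unitExp (k * h)‖ := by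
    rw [hunif]
    have h1 := norm_sub_norm_le (1 : ℂ) (((r : ℂ) * unitExp y) ^ (2 * N + 1))
    rw [norm_sub_rev, hnorm _ hr.le, norm_one] at h1
    have h2 : r ^ (2 * N + 1) ≤ 2 / 3 := by
      have h3 : r ≤ Real.exp (-(1 / (2 * (2 * N + 1)))) := by
        have := Real.add_one_le_exp (-(1 / (2 * (2 * N + 1))) : ℝ)
        linarith
      have h4 : Real.exp (-(1 / (2 * (2 * N + 1)))) ^ (2 * N + 1) = (Real.exp (1 / 2))⁻¹ := by
        rw [← Real.exp_nat_mul, ← Real.exp_neg]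
        congr 1
        push_cast
        field_simp
      have h5 := Real.add_one_le_exp (1 / 2 : ℝ)
      calc r ^ (2 * N + 1) ≤ _ := pow_le_pow_left₀ hr.le h3 _
        _ = _ := h4
        _ ≤ (3 / 2)⁻¹ := inv_anti₀ (by norm_num) (by linarith)
        _ = 2 / 3 := by norm_num
    linarith
  have hη : ∏ k ∈ s, (1 + |x k - k * h| * sensitivity r₀ (y - k * h))
      ≤ Real.exp (α * (4 * π + 6)) * (N : ℝ) ^ (2 * α) := by
    calc _ ≤ ∏ k ∈ s, Real.exp (α * (h * sensitivity r₀ (y - k * h))) := by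
          refine Finset.prod_le_prod (fun k _ => ?_) fun k hk => ?_
          · have := sensitivity_nonneg r₀ (y - k * h); positivity
          · have h1 := mul_le_mul_of_nonneg_right (hx k hk) (sensitivity_nonneg r₀ (y - k * h))
            have h2 := Real.add_one_le_exp (α * (h * sensitivity r₀ (y - k * h)))
            linarith
      _ = Real.exp (α * ∑ k ∈ s, h * sensitivity r₀ (y - k * h)) := by
          rw [← Real.exp_sum, ← Finset.mul_sum]
      _ ≤ Real.exp (α * (h / (1 - r₀) + 2 * (3 + Real.log N))) := by
          gcongr
          exact sum_sensitivity_le hN hr00 hr1 y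
      _ = _ := by
          rw [Real.rpow_def_of_pos (by linarith), ← Real.exp_add]
          congr 1
          have : h / (1 - r₀) = 4 * π := by
            rw [hr₀, hh]
            field_simp
            ring
          rw [this]
          ring
  have hmain : (∏ k ∈ s, ‖r₀ * unitExp y - unitExp (x k)‖)
      * ∏ k ∈ s, ‖r * unitExp y - unitExp (k * h)‖
      ≤ (∏ k ∈ s, (1 + |x k - k * h| * sensitivity r₀ (y - k * h))) *
        ((∏ k ∈ s, ‖r₀ * unitExp y - unitExp (k * h)‖)
          * ∏ k ∈ s, ‖r * unitExp y - unitExp (x k)‖) := by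
    simp only [← Finset.prod_mul_distrib]
    exact Finset.prod_le_prod (fun k _ => by positivity)
      fun k _ => norm_mul_norm_le hr hrr hr1 y (k * h) (x k)
  have hP0 : 0 ≤ ∏ k ∈ s, ‖r₀ * unitExp y - unitExp (x k)‖ := by positivity
  have hP : 0 ≤ ∏ k ∈ s, ‖r * unitExp y - unitExp (x k)‖ := by positivity
  calc _ ≤ 3 * ((∏ k ∈ s, ‖r₀ * unitExp y - unitExp (x k)‖)
      * ∏ k ∈ s, ‖r * unitExp y - unitExp (k * h)‖) := by nlinarith
    _ ≤ 3 * (Real.exp (α * (4 * π + 6)) * (N : ℝ) ^ (2 * α) *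
        (2 * ∏ k ∈ s, ‖r * unitExp y - unitExp (x k)‖)) := by
      refine mul_le_mul_of_nonneg_left (hmain.trans ?_) (by norm_num)
      gcongr
    _ = _ := by ring

/-- Moving the evaluation point from the unit circle to radius `r` costs at most `√r` per factor. -/
lemma prod_norm_sub_le {N : ℕ} {r : ℝ} (hr : r = 1 - 1 / (2 * (2 * N + 1))) (x : ℤ → ℝ) (y : ℝ)
    {j : ℤ} (hj : j ∈ Finset.Icc (-(N : ℤ)) (N : ℤ)) :
    ∏ k ∈ (Finset.Icc (-(N : ℤ)) (N : ℤ)).erase j, ‖unitExp y - unitExp (x k)‖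
      ≤ 4 / 3 * ∏ k ∈ (Finset.Icc (-(N : ℤ)) (N : ℤ)).erase j, ‖r * unitExp y - unitExp (x k)‖ := by
  have hτ : (1 : ℝ) / (2 * (2 * N + 1)) ≤ 1 / 2 := by
    refine one_div_le_one_div_of_le (by norm_num) ?_
    linarith [show (0 : ℝ) ≤ N by positivity]
  have hr0 : 0 < r := by linarith
  have hcard : #((Finset.Icc (-(N : ℤ)) (N : ℤ)).erase j) = 2 * N := by
    rw [Finset.card_erase_of_mem hj, card_Icc_neg_natCast, Nat.add_sub_cancel]
  have hfac : ∀ k, √r * ‖unitExp y - unitExp (x k)‖ ≤ ‖r * unitExp y - unitExp (x k)‖ := by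
    intro k
    refine le_of_sq_le_sq ?_ (norm_nonneg _)
    rw [mul_pow, Real.sq_sqrt hr0.le, norm_sq_smul_unitExp_sub, norm_unitExp_sub, mul_pow, sq_abs]
    nlinarith [sq_nonneg (1 - r)]
  have hprod := Finset.prod_le_prod (s := (Finset.Icc (-(N : ℤ)) (N : ℤ)).erase j)
    (fun k _ => by positivity) fun k _ => hfac k
  rw [Finset.prod_mul_distrib, Finset.prod_const, hcard, pow_mul, Real.sq_sqrt hr0.le] at hprod
  have hpow : 3 / 4 ≤ r ^ N := by
    have h1 := one_add_mul_le_pow (a := r - 1) (by linarith) N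
    rw [add_sub_cancel] at h1
    have h2 : (N : ℝ) * (1 / (2 * (2 * N + 1))) ≤ 1 / 4 := by
      rw [mul_one_div, div_le_div_iff₀ (by positivity) (by norm_num)]
      linarith
    rw [hr] at h1 ⊢
    linarith
  have h0 : 0 ≤ ∏ k ∈ (Finset.Icc (-(N : ℤ)) (N : ℤ)).erase j, ‖unitExp y - unitExp (x k)‖ := by
    positivity
  nlinarith

/-- The reciprocal distance is dominated by a Poisson kernel at one of the dyadic radii
`1 - 2 ^ i / (2 * n)`. -/
lemma exists_inv_norm_le_poisson {n : ℕ} (hn : 0 < n) (y a : ℝ) :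
    ∃ i ∈ Finset.range (Nat.log 2 n + 1),
      1 / ‖((1 - 1 / (2 * n) : ℝ) : ℂ) * unitExp y - unitExp a‖
        ≤ 32 * ((1 - (1 - 2 ^ i / (2 * n) : ℝ) ^ 2) /
          ‖((1 - 2 ^ i / (2 * n) : ℝ) : ℂ) * unitExp y - unitExp a‖ ^ 2) := by
  have hn1 : (1 : ℝ) ≤ n := by exact_mod_cast hn
  have hpow : ∀ i ≤ Nat.log 2 n, (2 : ℝ) ^ i ≤ n := fun i hi => by
    exact_mod_cast (Nat.pow_le_pow_right two_pos hi).trans (Nat.pow_log_le_self 2 hn.ne')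
  have hτ : ∀ i ≤ Nat.log 2 n, (2 : ℝ) ^ i / (2 * n) ≤ 1 / 2 := fun i hi => by
    rw [div_le_div_iff₀ (by positivity) (by norm_num)]
    linarith [hpow i hi]
  have hτpos : ∀ i : ℕ, 0 < (2 : ℝ) ^ i / (2 * n) := fun i => by positivity
  have hτ0 := hτ 0 (Nat.zero_le _)
  have hτ0' := hτpos 0
  have hτM : 1 / 4 < (2 : ℝ) ^ Nat.log 2 n / (2 * n) := by
    rw [div_lt_div_iff₀ (by norm_num) (by positivity)]
    have : (n : ℝ) < 2 ^ (Nat.log 2 n + 1) := by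
      exact_mod_cast Nat.lt_pow_succ_log_self one_lt_two n
    rw [pow_succ] at this
    linarith
  have hτs : ∀ i : ℕ, (2 : ℝ) ^ (i + 1) / (2 * n) = 2 * (2 ^ i / (2 * n)) := fun i => by ring
  obtain ⟨p, hp0, hp2, hpn⟩ : ∃ p : ℝ, 0 ≤ p ∧ p ≤ 2 ∧
      ∀ r : ℝ, ‖(r : ℂ) * unitExp y - unitExp a‖ ^ 2 = (1 - r) ^ 2 + r * p ^ 2 := by
    refine ⟨2 * |Real.sin ((y - a) / 2)|, by positivity, ?_, fun r => ?_⟩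
    · linarith [Real.abs_sin_le_one ((y - a) / 2)]
    · rw [norm_sq_smul_unitExp_sub, mul_pow, sq_abs]; ring
  have hApos : ∀ i ≤ Nat.log 2 n,
      0 < ‖((1 - 2 ^ i / (2 * n) : ℝ) : ℂ) * unitExp y - unitExp a‖ := fun i hi =>
    norm_smul_unitExp_sub_pos (by linarith [hτ i hi]) (by linarith [hτpos i]) y a
  have hnum : ∀ i ≤ Nat.log 2 n,
      (2 : ℝ) ^ i / (2 * n) ≤ 1 - (1 - 2 ^ i / (2 * n) : ℝ) ^ 2 := fun i hi => by
    nlinarith [hτ i hi, hτpos i]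
  have hA0 := hApos 0 (Nat.zero_le _)
  have hn0 := hnum 0 (Nat.zero_le _)
  have hpn0 := hpn (1 - 2 ^ 0 / (2 * n))
  rw [pow_zero] at hτ0 hτ0' hA0 hn0 hpn0
  rcases le_or_gt p (1 / (2 * n)) with h | h
  · refine ⟨0, by simp, ?_⟩
    rw [pow_zero, ← mul_div_assoc, div_le_div_iff₀ hA0 (by positivity)]
    generalize ‖((1 - 1 / (2 * n) : ℝ) : ℂ) * unitExp y - unitExp a‖ = A at *
    generalize (1 : ℝ) / (2 * n) = τ at *
    have hA : A ≤ 2 * τ := le_of_sq_le_sq (by nlinarith) (by linarith)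
    nlinarith
  · classical
    obtain ⟨i, hi, hip, hi8⟩ : ∃ i ≤ Nat.log 2 n, (2 : ℝ) ^ i / (2 * n) ≤ p ∧
        p < 8 * (2 ^ i / (2 * n)) := by
      have hg := Nat.findGreatest_spec (P := fun i => (2 : ℝ) ^ i / (2 * n) ≤ p)
        (Nat.zero_le (Nat.log 2 n)) (by simpa using h.le)
      set i := Nat.findGreatest (fun i => (2 : ℝ) ^ i / (2 * n) ≤ p) (Nat.log 2 n) with hidef
      have hile : i ≤ Nat.log 2 n := Nat.findGreatest_le _
      refine ⟨i, hile, hg, ?_⟩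
      rcases hile.eq_or_lt with he | hl
      · rw [he]; linarith
      · have := Nat.findGreatest_is_greatest (P := fun i => (2 : ℝ) ^ i / (2 * n) ≤ p)
          (Nat.lt_succ_self i) hl
        rw [not_le, hτs] at this
        linarith [hτpos i]
    refine ⟨i, by simpa [Nat.lt_succ_iff] using hi, ?_⟩
    have hA := hApos i hi
    have hni := hnum i hi
    have hpi := hpn (1 - 2 ^ i / (2 * n))
    have hτi := hτ i hi
    have hτi' := hτpos i
    rw [← mul_div_assoc, div_le_div_iff₀ hA0 (by positivity), hpi]
    have hpA : p / 2 ≤ ‖((1 - 1 / (2 * n) : ℝ) : ℂ) * unitExp y - unitExp a‖ :=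
      le_of_sq_le_sq (by nlinarith) hA0.le
    generalize ‖((1 - 1 / (2 * n) : ℝ) : ℂ) * unitExp y - unitExp a‖ = A at *
    generalize (2 : ℝ) ^ i / (2 * n) = τ at *
    have h1 : 32 * (τ * (p / 2)) ≤ 32 * (1 - (1 - τ) ^ 2) * A := by
      have := mul_le_mul hni hpA (by linarith) (by nlinarith)
      linarith
    nlinarith

lemma natLog_two_add_one_le {ε : ℝ} (hε : 0 < ε) {N : ℕ} (hN : 0 < N) :
    (Nat.log 2 (2 * N + 1) : ℝ) + 1 ≤ (1 + 2 * 3 ^ ε / ε) * (N : ℝ) ^ ε := by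
  have hN1 : (1 : ℝ) ≤ N := by exact_mod_cast hN
  have h1 : (Nat.log 2 (2 * N + 1) : ℝ) * Real.log 2 ≤ Real.log (2 * N + 1) := by
    rw [← Real.log_pow]
    refine Real.log_le_log (by positivity) ?_
    exact_mod_cast Nat.pow_log_le_self 2 (Nat.succ_ne_zero (2 * N))
  have h2 := Real.log_le_rpow_div (x := 2 * N + 1) (by positivity) hε
  have h3 : ((2 : ℝ) * N + 1) ^ ε ≤ 3 ^ ε * (N : ℝ) ^ ε := by
    rw [← Real.mul_rpow (by norm_num) (by positivity)]
    exact Real.rpow_le_rpow (by positivity) (by linarith) hε.le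
  have h4 : (2 * (N : ℝ) + 1) ^ ε / ε ≤ 3 ^ ε * (N : ℝ) ^ ε / ε := by gcongr
  have h5 := Real.one_le_rpow hN1 hε.le
  have h6 : (Nat.log 2 (2 * N + 1) : ℝ) ≤ 2 * Real.log (2 * N + 1) := by
    have := Real.log_two_gt_d9
    nlinarith [show (0 : ℝ) ≤ Nat.log 2 (2 * N + 1) by positivity]
  calc _ ≤ 2 * (3 ^ ε * (N : ℝ) ^ ε / ε) + (N : ℝ) ^ ε := by linarith
    _ = _ := by ring

/-- The Lebesgue function of the interpolation at perturbed nodes is `O(N ^ (2 * α) * log N)`. -/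
lemma PerturbedNodes.lebesgue_le {N : ℕ} (hN : 0 < N) {α : ℝ} (hα0 : 0 ≤ α) (hα : α < 1 / 2)
    {x : ℤ → ℝ} (hx : PerturbedNodes N α x) (y : ℝ) :
    ∑ j ∈ Finset.Icc (-(N : ℤ)) (N : ℤ),
      ((∏ k ∈ (Finset.Icc (-(N : ℤ)) (N : ℤ)).erase j, ‖unitExp y - unitExp (x k)‖) /
        ∏ k ∈ (Finset.Icc (-(N : ℤ)) (N : ℤ)).erase j, ‖unitExp (x j) - unitExp (x k)‖)
      ≤ 512 * Real.exp (α * (4 * π + 6)) / Real.cos (π * α) * (N : ℝ) ^ (2 * α) *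
        (Nat.log 2 (2 * N + 1) + 1) := by
  set s := Finset.Icc (-(N : ℤ)) (N : ℤ) with hs
  set c := Real.cos (π * α) with hcdef
  set n := 2 * N + 1 with hn
  set ρ : ℕ → ℝ := fun i => 1 - 2 ^ i / (2 * n) with hρdef
  set Q : ℝ := 6 * Real.exp (α * (4 * π + 6)) * (N : ℝ) ^ (2 * α) with hQ
  have hncast : (n : ℝ) = 2 * N + 1 := by rw [hn]; push_cast; ring
  have hn0 : (0 : ℝ) < n := by rw [hncast]; positivity
  have hc : 0 < c := Real.cos_pos_of_mem_Ioo ⟨by nlinarith [pi_pos], by nlinarith [pi_pos]⟩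
  have hρ0 : ρ 0 = 1 - 1 / (2 * (2 * N + 1)) := by simp [hρdef, hncast]
  have hρpos : ∀ i ∈ Finset.range (Nat.log 2 n + 1), 0 < ρ i := fun i hi => by
    have h1 : (2 : ℝ) ^ i ≤ n := by
      exact_mod_cast (Nat.pow_le_pow_right two_pos (Nat.lt_succ_iff.1 (Finset.mem_range.1 hi))).trans
        (Nat.pow_log_le_self 2 (Nat.succ_ne_zero (2 * N)))
    have h2 : (2 : ℝ) ^ i / (2 * n) < 1 := by
      rw [div_lt_one (by positivity)]; linarith
    simp only [hρdef]
    linarith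
  have hρlt : ∀ i, ρ i < 1 := fun i => by
    simp only [hρdef]
    linarith [show (0 : ℝ) < 2 ^ i / (2 * n) by positivity]
  have hρle : ∀ i, ρ i ≤ ρ 0 := fun i => by
    simp only [hρdef]
    gcongr
    · norm_num
    · exact Nat.zero_le i
  have hρ00 : 0 < ρ 0 := hρpos 0 (by simp)
  set P : ℝ := ∏ k ∈ s, ‖ρ 0 * unitExp y - unitExp (x k)‖ with hP
  have hP0 : 0 ≤ P := by positivity
  set V : ℤ → ℝ := fun j => ∏ k ∈ s.erase j, ‖unitExp (x j) - unitExp (x k)‖ with hV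
  have hV0 : ∀ j, 0 ≤ V j := fun j => by positivity
  set K : ℕ → ℤ → ℝ := fun i j => (1 - ρ i ^ 2) / ‖ρ i * unitExp y - unitExp (x j)‖ ^ 2 with hK
  have hK0 : ∀ i ∈ Finset.range (Nat.log 2 n + 1), ∀ j, 0 ≤ K i j := fun i hi j =>
    div_nonneg (by nlinarith [hρpos i hi, hρlt i]) (by positivity)
  have hterm : ∀ j ∈ s, (∏ k ∈ s.erase j, ‖unitExp y - unitExp (x k)‖) / V j
      ≤ ∑ i ∈ Finset.range (Nat.log 2 n + 1), 64 / 3 * P / c * (2 * c / V j * K i j) := by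
    intro j hj
    have hA := norm_smul_unitExp_sub_pos hρ00.le (hρlt 0) y (x j)
    have h1 : ∏ k ∈ s.erase j, ‖unitExp y - unitExp (x k)‖
        ≤ 4 / 3 * (P * (1 / ‖ρ 0 * unitExp y - unitExp (x j)‖)) := by
      refine (prod_norm_sub_le hρ0 x y hj).trans_eq ?_
      rw [hP, ← Finset.mul_prod_erase s _ hj]
      field_simp
      rfl
    obtain ⟨i, hi, hle⟩ := exists_inv_norm_le_poisson (Nat.succ_pos (2 * N)) y (x j)
    have h2 : 1 / ‖ρ 0 * unitExp y - unitExp (x j)‖ ≤ 32 * K i j := by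
      simpa only [hρdef, hK, pow_zero] using hle
    calc _ ≤ 4 / 3 * (P * (32 * K i j)) / V j := by
          have := hV0 j
          gcongr
          refine h1.trans ?_
          gcongr
      _ = 64 / 3 * P / c * (2 * c / V j * K i j) := by
          field_simp
          ring
      _ ≤ _ := Finset.single_le_sum
          (f := fun i => 64 / 3 * P / c * (2 * c / V j * K i j)) (fun i hi => by
            have := hK0 i hi j
            have := hV0 j
            positivity) hi
  have hrow : ∀ i ∈ Finset.range (Nat.log 2 n + 1),
      ∑ j ∈ s, 64 / 3 * P / c * (2 * c / V j * K i j) ≤ 256 / 3 * Q / c := by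
    intro i hi
    have hpos : 0 < ∏ k ∈ s, ‖ρ i * unitExp y - unitExp (x k)‖ :=
      Finset.prod_pos fun k _ => norm_smul_unitExp_sub_pos (hρpos i hi).le (hρlt i) y (x k)
    have hPQ := hx.prod_norm_le hN hα0 hρ0 (hρpos i hi) (hρle i) y
    rw [← Finset.mul_sum]
    calc _ ≤ 64 / 3 * P / c * (4 / ∏ k ∈ s, ‖ρ i * unitExp y - unitExp (x k)‖) := by
          gcongr
          exact hx.sum_poisson_le hα (hρpos i hi).le (hρlt i) y
      _ = 256 / 3 * (P / ∏ k ∈ s, ‖ρ i * unitExp y - unitExp (x k)‖) / c := by ring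
      _ ≤ _ := by
          gcongr
          rwa [div_le_iff₀ hpos]
  calc _ ≤ ∑ j ∈ s, ∑ i ∈ Finset.range (Nat.log 2 n + 1),
        64 / 3 * P / c * (2 * c / V j * K i j) := Finset.sum_le_sum hterm
    _ = ∑ i ∈ Finset.range (Nat.log 2 n + 1), ∑ j ∈ s,
        64 / 3 * P / c * (2 * c / V j * K i j) := Finset.sum_comm
    _ ≤ ∑ i ∈ Finset.range (Nat.log 2 n + 1), 256 / 3 * Q / c := Finset.sum_le_sum hrow
    _ = _ := by
        rw [Finset.sum_const, Finset.card_range, nsmul_eq_mul, hQ]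
        push_cast
        ring

lemma norm_le_supIco {g : ℝ → ℂ} (hg : Continuous g) (hper : Function.Periodic g (2 * π)) (t : ℝ) :
    ‖g t‖ ≤ supIco g := by
  obtain ⟨u, hu, htu⟩ := hper.exists_mem_Ico Real.two_pi_pos t (-π)
  rw [show -π + 2 * π = π by ring] at hu
  rw [htu]
  have hbdd : BddAbove (Set.range fun v : Set.Ico (-π) π => ‖g v‖) := by
    obtain ⟨B, hB⟩ := (isCompact_Icc (a := -π) (b := π)).exists_bound_of_continuousOn hg.continuousOn
    refine ⟨B, ?_⟩
    rintro _ ⟨v, rfl⟩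
    exact hB v (Set.Ico_subset_Icc_self v.2)
  exact le_ciSup hbdd ⟨u, hu⟩

/-- improved Lebesgue-type bound O(N^{2α₀}) for interpolation at α-perturbed
nodes, for any α < α₀ < 1/2 with α < 1/4. -/
theorem interpolation_improved_rate (α α₀ : ℝ) (hα0 : 0 ≤ α) (hα : α < 1/4)
    (hαα₀ : α < α₀) (hα₀ : α₀ < 1/2) :
    ∃ C : ℝ, 0 < C ∧
      ∀ N : ℕ, 0 < N → ∀ x : ℤ → ℝ, PerturbedNodes N α x →
        ∀ f : ℝ → ℂ, Continuous f → Function.Periodic f (2*π) →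
          ∀ qt : ℝ → ℂ, IsTrigPoly N qt →
            (∀ j ∈ Finset.Icc (-(N:ℤ)) (N:ℤ), qt (x j) = f (x j)) →
            ∀ q : ℝ → ℂ, IsTrigPoly N q → ∀ y ∈ Set.Ico (-π) π,
              ‖f y - qt y‖ ≤ C * (N:ℝ) ^ (2*α₀) * supIco (fun t => f t - q t) := by
  have hc : 0 < Real.cos (π * α) :=
    Real.cos_pos_of_mem_Ioo ⟨by nlinarith [pi_pos], by nlinarith [pi_pos]⟩
  have hε : 0 < 2 * (α₀ - α) := by linarith
  set A : ℝ := 512 * Real.exp (α * (4 * π + 6)) / Real.cos (π * α) with hA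
  set B : ℝ := 1 + 2 * 3 ^ (2 * (α₀ - α)) / (2 * (α₀ - α)) with hB
  have hA0 : 0 < A := by positivity
  have hB0 : 0 < B := by positivity
  refine ⟨1 + A * B, by positivity, ?_⟩
  intro N hN x hx f hf hfper qt hqt hinterp q hq y _
  have hN1 : (1 : ℝ) ≤ N := by exact_mod_cast hN
  have hsup := norm_le_supIco (hf.sub hq.continuous_s14) (hfper.sub hq.periodic)
  change ∀ t, ‖f t - q t‖ ≤ supIco (fun t => f t - q t) at hsup
  set S := supIco (fun t => f t - q t) with hS
  have hS0 : 0 ≤ S := (norm_nonneg _).trans (hsup 0)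
  have hL := hx.lebesgue_le hN hα0 (by linarith) y
  have hlog := natLog_two_add_one_le hε hN
  have hpow : (N : ℝ) ^ (2 * α) * (N : ℝ) ^ (2 * (α₀ - α)) = (N : ℝ) ^ (2 * α₀) := by
    rw [← Real.rpow_add (by linarith)]
    congr 1
    ring
  have hone : 1 ≤ (N : ℝ) ^ (2 * α₀) := Real.one_le_rpow hN1 (by linarith)
  have hg : ‖qt y - q y‖ ≤ S * (A * B * (N : ℝ) ^ (2 * α₀)) := by
    refine ((hqt.sub hq).norm_le_sum_lagrange (hx.injOn_unitExp (by linarith)) y).trans ?_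
    calc _ ≤ ∑ j ∈ Finset.Icc (-(N : ℤ)) (N : ℤ), S *
          ((∏ k ∈ (Finset.Icc (-(N : ℤ)) (N : ℤ)).erase j, ‖unitExp y - unitExp (x k)‖) /
            ∏ k ∈ (Finset.Icc (-(N : ℤ)) (N : ℤ)).erase j, ‖unitExp (x j) - unitExp (x k)‖) := by
          refine Finset.sum_le_sum fun j hj => ?_
          gcongr
          rw [hinterp j hj]
          exact hsup (x j)
      _ ≤ S * (A * (N : ℝ) ^ (2 * α) * (B * (N : ℝ) ^ (2 * (α₀ - α)))) := by
          rw [← Finset.mul_sum]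
          gcongr
          refine hL.trans ?_
          gcongr
      _ = _ := by rw [← hpow]; ring
  calc ‖f y - qt y‖ = ‖(f y - q y) - (qt y - q y)‖ := by rw [sub_sub_sub_cancel_right]
    _ ≤ ‖f y - q y‖ + ‖qt y - q y‖ := norm_sub_le _ _
    _ ≤ S + S * (A * B * (N : ℝ) ^ (2 * α₀)) := add_le_add (hsup y) hg
    _ ≤ _ := by nlinarith
end
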